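/- Let s be an even integer with s ≥ 6, N ≥ 2s, ν ≥ π, and let C = {x_1,…,x_M} ⊂ SO(3) have separation ρ(C) ≥ ν/(N+1). Suppose there is a constant b > 3 + c_s/4 with ν^s > b·C_{2,s}/c_s, where c_s = 0.999/(2(s+1)) and C_{2,s} = 124·c_{2,s}·ζ(s−2). Then the interpolation matrix K is invertible, and for every u ∈ {−1,1}^M the unique solution α = (α_0,α_1,α_2,α_3) of Kα = (u,0,0,0)ᵀ satisfies ‖α_0‖_∞ ≤ 1 + c_s/(4(b−3)−c_s) and ‖α_j‖_∞ ≤ 2/((4(b−3)−c_s)(N+1)) for j = 1,2,3; moreover, for every index i with u_i = 1 one has α_{0,i} ≥ 1 − c_s/(4(b−3)−c_s). -/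

import Mathlib

noncomputable section

abbrev Mat3 := Matrix (Fin 3) (Fin 3) ℝ

/-- membership in SO(3) -/
def IsSO3 (x : Mat3) : Prop := x.transpose * x = 1 ∧ x.det = 1

/-- rotation angle -/
def rotAngle (x : Mat3) : ℝ := Real.arccos ((Matrix.trace x - 1) / 2)

/-- generators of so(3) -/
def Lgen : Fin 3 → Mat3 :=
  ![!![0, 0, 0; 0, 0, -1; 0, 1, 0],
    !![0, 0, 1; 0, 0, 0; -1, 0, 0],
    !![0, -1, 0; 1, 0, 0; 0, 0, 0]]

/-- derivative in the first variable along generator `i` -/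
def Xx (i : Fin 3) (f : Mat3 → Mat3 → ℝ) : Mat3 → Mat3 → ℝ :=
  fun x y => deriv (fun t : ℝ => f (x * NormedSpace.exp (t • Lgen i)) y) 0

/-- derivative in the second variable along generator `i` -/
def Xy (i : Fin 3) (f : Mat3 → Mat3 → ℝ) : Mat3 → Mat3 → ℝ :=
  fun x y => deriv (fun t : ℝ => f x (y * NormedSpace.exp (t • Lgen i))) 0

/-- iterated integrals of the sign of the Chebyshev polynomial: the perfect B-spline chain -/
def fspline (s : ℕ) : ℕ → ℝ → ℝ
  | 0 => fun x => (-1 : ℝ) ^ (s - 1) * Real.sign ((Polynomial.Chebyshev.U ℝ ((s : ℤ) - 1)).eval x)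
  | (k + 1) => fun x => ∫ t in (-1 : ℝ)..x, fspline s k t

/-- the scaled perfect B-spline g̃_{s-1} -/
def gtilde (s : ℕ) (x : ℝ) : ℝ := fspline s (s - 1) (2 * x)

/-- discrete norm ‖g̃‖_{1,N} -/
def gnorm (s N : ℕ) : ℝ :=
  ∑ k ∈ Finset.Icc (-(N : ℤ)) (N : ℤ), gtilde s ((k : ℝ) / (2 * ((N : ℝ) + 1)))

/-- the trigonometric kernel σ̃_N (real-valued) -/
def sigmaT (s N : ℕ) (t : ℝ) : ℝ :=
  ((1 / (gnorm s N : ℂ)) *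
      ∑ k ∈ Finset.Icc (-(N : ℤ)) (N : ℤ),
        (gtilde s ((k : ℝ) / (2 * ((N : ℝ) + 1))) : ℂ) * Complex.exp ((k : ℂ) * t * Complex.I)).re

/-- the zonal kernel σ_N on SO(3) -/
def sigmaK (s N : ℕ) (x y : Mat3) : ℝ := sigmaT s N (rotAngle (y⁻¹ * x))

/-- rotation axis components -/
def axisComp : Fin 3 → Mat3 → ℝ :=
  ![fun x => (x 2 1 - x 1 2) / (2 * Real.sin (rotAngle x)),
    fun x => (x 0 2 - x 2 0) / (2 * Real.sin (rotAngle x)),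
    fun x => (x 1 0 - x 0 1) / (2 * Real.sin (rotAngle x))]

/-- Levi-Civita symbol on `Fin 3` -/
def eps3 (a b c : Fin 3) : ℝ :=
  if (a, b, c) = (0, 1, 2) ∨ (a, b, c) = (1, 2, 0) ∨ (a, b, c) = (2, 0, 1) then 1
  else if (a, b, c) = (2, 1, 0) ∨ (a, b, c) = (1, 0, 2) ∨ (a, b, c) = (0, 2, 1) then -1
  else 0

/-- constants c_{l,s} -/
def cConst : ℕ → ℕ → ℝ
  | 0, s => 1.02 * (Nat.factorial (s - 1)) * 2 ^ s * s
  | 1, s => 1.02 * (Nat.factorial (s - 1)) * 2 ^ s * (2 * s)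
  | 2, s => 1.02 * (Nat.factorial (s - 1)) * 2 ^ s * (4 * s + 1)
  | _, s => 1.02 * (Nat.factorial (s - 1)) * 2 ^ s * (9 * s - 2)

/-- ζ(m) for natural m -/
def zetaNat (m : ℕ) : ℝ := ∑' n : ℕ, (1 : ℝ) / ((n : ℝ) + 1) ^ m

/-- constants C_{i,s} = 124 c_{i,s} ζ(s-2) -/
def CConst (i s : ℕ) : ℝ := 124 * cConst i s * zetaNat (s - 2)

end

open scoped Real

/-- block selector: 0 ↦ kernel, p ↦ derivative along generator p−1 -/
def toOp : Fin 4 → Option (Fin 3) := ![none, some 0, some 1, some 2]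

/-- the (p,q) block kernel of the interpolation matrix -/
noncomputable def Kblock (s N : ℕ) (p q : Fin 4) : Mat3 → Mat3 → ℝ :=
  match toOp p, toOp q with
  | none, none => sigmaK s N
  | none, some j => Xx j (sigmaK s N)
  | some i, none => Xy i (sigmaK s N)
  | some i, some j => Xx j (Xy i (sigmaK s N))

/-- the 4M × 4M interpolation matrix K -/
noncomputable def Kmat (s N : ℕ) {M : ℕ} (x : Fin M → Mat3) :
    Matrix (Fin 4 × Fin M) (Fin 4 × Fin M) ℝ :=
  Matrix.of fun pa qb => Kblock s N pa.1 qb.1 (x pa.2) (x qb.2)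

/-- right-hand side (u,0,0,0)ᵀ -/
def rhsVec {M : ℕ} (u : Fin M → ℝ) : Fin 4 × Fin M → ℝ :=
  fun pa => if pa.1 = 0 then u pa.2 else 0

section

open Finset

/-- The knots of the perfect spline, listed with multiplicity over a full period. -/
noncomputable def knot (s j : ℕ) : ℝ := Real.cos (j * π / s)

lemma sum_alternating_exp (s : ℕ) (hs : 0 < s) (k : ℤ) :
    ∑ j ∈ range (2 * s), (-1 : ℂ) ^ j * Complex.exp (k * (j * π / s) * Complex.I) =
      if (2 * s : ℤ) ∣ k + s then (2 * s : ℂ) else 0 := by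
  have hs' : (s : ℂ) ≠ 0 := by exact_mod_cast hs.ne'
  have hprim := Complex.isPrimitiveRoot_exp (2 * s) (by omega)
  set z := Complex.exp (2 * π * Complex.I / ((2 * s : ℕ) : ℂ)) with hz
  have hterm : ∀ j : ℕ, (-1 : ℂ) ^ j * Complex.exp (k * (j * π / s) * Complex.I) =
      (z ^ (k + s : ℤ)) ^ j := by
    intro j
    have h1 : (-1 : ℂ) = Complex.exp (π * Complex.I) := Complex.exp_pi_mul_I.symm
    rw [h1, ← Complex.exp_nat_mul, ← Complex.exp_add, hz, ← Complex.exp_int_mul,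
      ← Complex.exp_nat_mul]
    congr 1
    push_cast
    field_simp
    ring
  simp_rw [hterm]
  have hdvd : z ^ (k + s : ℤ) = 1 ↔ (2 * s : ℤ) ∣ k + s := by
    rw [hprim.zpow_eq_one_iff_dvd]; push_cast; rfl
  split_ifs with h
  · rw [hdvd.2 h]; simp
  · have hne : z ^ (k + s : ℤ) ≠ 1 := fun h' => h (hdvd.1 h')
    rw [geom_sum_eq hne]
    have : (z ^ (k + s : ℤ)) ^ (2 * s) = 1 := by
      rw [← zpow_natCast, zpow_comm, zpow_natCast, hprim.pow_eq_one, one_zpow]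
    rw [this]; simp

lemma sum_alternating_knot_pow (s : ℕ) (hs : 0 < s) (n : ℕ) :
    ∑ j ∈ range (2 * s), (-1 : ℝ) ^ j * knot s j ^ n =
      2 * s / 2 ^ n * ∑ m ∈ range (n + 1),
        if (2 * s : ℤ) ∣ (n - 2 * m : ℤ) + s then (n.choose m : ℝ) else 0 := by
  have key : ∑ j ∈ range (2 * s), (-1 : ℂ) ^ j * (knot s j : ℂ) ^ n =
      2 * s / 2 ^ n * ∑ m ∈ range (n + 1),
        if (2 * s : ℤ) ∣ (n - 2 * m : ℤ) + s then (n.choose m : ℂ) else 0 := by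
    have hcos : ∀ j : ℕ, (knot s j : ℂ) ^ n = ∑ m ∈ range (n + 1),
        (n.choose m : ℂ) / 2 ^ n *
          Complex.exp (((n - 2 * m : ℤ) : ℂ) * (j * π / s) * Complex.I) := by
      intro j
      rw [knot, Complex.ofReal_cos, Complex.cos, div_pow, add_comm, add_pow, sum_div]
      refine sum_congr rfl fun m hm => ?_
      have hm' : m ≤ n := Nat.lt_succ_iff.1 (mem_range.1 hm)
      rw [← Complex.exp_nat_mul, ← Complex.exp_nat_mul, ← Complex.exp_add]
      have : (m : ℂ) * (-((j * π / s : ℝ) : ℂ) * Complex.I) +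
          ((n - m : ℕ) : ℂ) * (((j * π / s : ℝ) : ℂ) * Complex.I) =
          ((n - 2 * m : ℤ) : ℂ) * (j * π / s) * Complex.I := by
        push_cast [Nat.cast_sub hm']; ring
      rw [this]; ring
    simp_rw [hcos, mul_sum]
    rw [sum_comm]
    refine sum_congr rfl fun m _ => ?_
    have h := sum_alternating_exp s hs (n - 2 * m)
    calc _ = (n.choose m : ℂ) / 2 ^ n * ∑ j ∈ range (2 * s), (-1 : ℂ) ^ j *
          Complex.exp (((n - 2 * m : ℤ) : ℂ) * (j * π / s) * Complex.I) := by
          rw [mul_sum]; refine sum_congr rfl fun j _ => by ring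
      _ = _ := by
          rw [h]; split_ifs <;> ring
  have key' := congrArg Complex.re key
  have e : ∀ r : ℝ, ((r : ℂ)).re = r := Complex.ofReal_re
  rw [← e (∑ j ∈ range (2 * s), (-1 : ℝ) ^ j * knot s j ^ n),
    ← e (2 * s / 2 ^ n * ∑ m ∈ range (n + 1), _)]
  push_cast [apply_ite ((↑) : ℝ → ℂ)]
  exact key'

lemma sum_alternating_knot_pow_eq_zero (s : ℕ) (n : ℕ) (hn : n < s) :
    ∑ j ∈ range (2 * s), (-1 : ℝ) ^ j * knot s j ^ n = 0 := by
  rw [sum_alternating_knot_pow s (by omega)]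
  rw [sum_eq_zero, mul_zero]
  intro m hm
  have hm' := mem_range.1 hm
  rw [if_neg]
  rintro ⟨c, hc⟩
  have h1 : 0 < (s : ℤ) * (2 * c) := by linarith [show (0 : ℤ) < (n - 2 * m) + s by omega]
  have h2 : (s : ℤ) * (2 * c) < s * 2 := by linarith [show ((n : ℤ) - 2 * m) + s < s * 2 by omega]
  have h3 : 0 < 2 * c := pos_of_mul_pos_right h1 (by omega)
  have h4 : 2 * c < 2 := lt_of_mul_lt_mul_left h2 (by omega)
  omega

lemma sum_alternating_knot_pow_self (s : ℕ) (hs : 0 < s) :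
    ∑ j ∈ range (2 * s), (-1 : ℝ) ^ j * knot s j ^ s = 4 * s / 2 ^ s := by
  rw [sum_alternating_knot_pow s hs]
  have hsum : ∑ m ∈ range (s + 1),
      (if (2 * s : ℤ) ∣ (s - 2 * m : ℤ) + s then (s.choose m : ℝ) else 0) = 2 := by
    have : ∀ m ∈ range (s + 1),
        (if (2 * s : ℤ) ∣ (s - 2 * m : ℤ) + s then (s.choose m : ℝ) else 0) =
        (if m = 0 then 1 else 0) + if m = s then 1 else 0 := by
      intro m hm
      have hm' := mem_range.1 hm
      rcases Nat.eq_zero_or_pos m with rfl | hm0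
      · simp [show (s : ℤ) + s = 2 * s by ring, hs.ne]
      rcases eq_or_ne m s with rfl | hms
      · simp [hs.ne', show (m : ℤ) - 2 * m + m = 0 by ring]
      · rw [if_neg, if_neg hm0.ne', if_neg hms, add_zero]
        rintro ⟨c, hc⟩
        have h1 : 0 < (s : ℤ) * (2 * c) := by
          linarith [show (0 : ℤ) < (s - 2 * m) + s by omega]
        have h2 : (s : ℤ) * (2 * c) < s * 2 := by
          linarith [show ((s : ℤ) - 2 * m) + s < s * 2 by omega]
        have h3 : 0 < 2 * c := pos_of_mul_pos_right h1 (by omega)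
        have h4 : 2 * c < 2 := lt_of_mul_lt_mul_left h2 (by omega)
        omega
    rw [sum_congr rfl this, sum_add_distrib]
    simp
    norm_num
  rw [hsum]; ring

lemma sum_alternating_knot_pow_add_two (s : ℕ) (hs : 2 < s) :
    ∑ j ∈ range (2 * s), (-1 : ℝ) ^ j * knot s j ^ (s + 2) = s * (s + 2) / 2 ^ s := by
  rw [sum_alternating_knot_pow s (by omega)]
  have hsum : ∑ m ∈ range (s + 2 + 1),
      (if (2 * s : ℤ) ∣ ((s + 2 : ℕ) - 2 * m : ℤ) + s then ((s + 2).choose m : ℝ) else 0) =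
      2 * (s + 2) := by
    have : ∀ m ∈ range (s + 2 + 1),
        (if (2 * s : ℤ) ∣ ((s + 2 : ℕ) - 2 * m : ℤ) + s then ((s + 2).choose m : ℝ) else 0) =
        (if m = 1 then (s + 2 : ℝ) else 0) + if m = s + 1 then (s + 2 : ℝ) else 0 := by
      intro m hm
      have hm' := mem_range.1 hm
      rcases eq_or_ne m 1 with rfl | hm1
      · have : (2 * s : ℤ) ∣ ((s + 2 : ℕ) - 2 * (1 : ℕ) : ℤ) + s := ⟨1, by push_cast; ring⟩
        rw [if_pos this]
        simp [show s ≠ 0 by omega]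
      rcases eq_or_ne m (s + 1) with rfl | hms
      · have : (2 * s : ℤ) ∣ ((s + 2 : ℕ) - 2 * (s + 1 : ℕ) : ℤ) + s := ⟨0, by push_cast; ring⟩
        rw [if_pos this, Nat.choose_succ_self_right]
        simp [show s ≠ 0 by omega]
        ring
      · rw [if_neg, if_neg hm1, if_neg hms, add_zero]
        rintro ⟨c, hc⟩
        have e : (2 * s : ℤ) * c = s * (2 * c) := by ring
        rw [e] at hc
        push_cast at hc
        have h1 : (s : ℤ) * (-2) < (s : ℤ) * (2 * c) := by omega
        have h2 : (s : ℤ) * (2 * c) < s * 4 := by omega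
        have h3 : -2 < 2 * c := lt_of_mul_lt_mul_left h1 (by omega)
        have h4 : 2 * c < 4 := lt_of_mul_lt_mul_left h2 (by omega)
        have : c = 0 ∨ c = 1 := by omega
        rcases this with rfl | rfl <;> omega
    rw [sum_congr rfl this, sum_add_distrib, sum_ite_eq' , sum_ite_eq']
    rw [if_pos (mem_range.2 (by omega)), if_pos (mem_range.2 (by omega))]
    ring
  rw [hsum, pow_add]
  field_simp

lemma sum_alternating_one_sub_knot_pow (s n : ℕ) (hn : n < s) (y : ℝ) :
    ∑ j ∈ range (2 * s), (-1 : ℝ) ^ j * (y - knot s j) ^ n = 0 := by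
  have : ∀ j ∈ range (2 * s), (-1 : ℝ) ^ j * (y - knot s j) ^ n =
      ∑ m ∈ range (n + 1), y ^ m * (-1) ^ (n - m) * n.choose m *
        ((-1 : ℝ) ^ j * knot s j ^ (n - m)) := by
    intro j _
    rw [sub_eq_add_neg, add_pow, mul_sum]
    refine sum_congr rfl fun m _ => ?_
    rw [neg_pow]; ring
  rw [sum_congr rfl this, sum_comm]
  refine sum_eq_zero fun m _ => ?_
  rw [← mul_sum, sum_alternating_knot_pow_eq_zero s _ (by omega), mul_zero]

/-- The spline with alternating weights at the knots, normalised as an `n`-fold antiderivative. -/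
noncomputable def altSpline (s n : ℕ) (x : ℝ) : ℝ :=
  ∑ j ∈ range (2 * s), (-1 : ℝ) ^ j *
    if knot s j < x then (x - knot s j) ^ n / n.factorial else 0

lemma neg_one_le_knot (s j : ℕ) : -1 ≤ knot s j := Real.neg_one_le_cos _

lemma knot_le_one (s j : ℕ) : knot s j ≤ 1 := Real.cos_le_one _

lemma altSpline_of_le_neg_one (s n : ℕ) {x : ℝ} (hx : x ≤ -1) : altSpline s n x = 0 := by
  refine sum_eq_zero fun j _ => ?_
  rw [if_neg (by linarith [neg_one_le_knot s j]), mul_zero]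

lemma altSpline_of_one_le (s n : ℕ) (hn : n ≠ 0) (hns : n < s) {x : ℝ} (hx : 1 ≤ x) :
    altSpline s n x = 0 := by
  have h := sum_alternating_one_sub_knot_pow s n hns x
  have : altSpline s n x =
      (∑ j ∈ range (2 * s), (-1 : ℝ) ^ j * (x - knot s j) ^ n) / n.factorial := by
    rw [altSpline, sum_div]
    refine sum_congr rfl fun j _ => ?_
    split_ifs with hj
    · ring
    · have : x - knot s j = 0 := by linarith [knot_le_one s j]
      simp [this, hn]
  rw [this, h, zero_div]

lemma truncPow_eq_max (n : ℕ) (hn : n ≠ 0) (ξ x : ℝ) :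
    (if ξ < x then (x - ξ) ^ n / n.factorial else 0 : ℝ) = max (x - ξ) 0 ^ n / n.factorial := by
  split_ifs with h
  · rw [max_eq_left (by linarith)]
  · rw [max_eq_right (by linarith)]; simp [hn]

lemma continuous_altSpline (s n : ℕ) (hn : n ≠ 0) : Continuous (altSpline s n) := by
  unfold altSpline
  simp_rw [truncPow_eq_max n hn]
  fun_prop

lemma intervalIntegrable_truncPow (n : ℕ) (ξ a b : ℝ) :
    IntervalIntegrable (fun t => if ξ < t then (t - ξ) ^ n / n.factorial else 0 : ℝ → ℝ)
      MeasureTheory.volume a b := by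
  have h : Continuous fun t : ℝ => (t - ξ) ^ n / n.factorial := by fun_prop
  have e : (fun t => if ξ < t then (t - ξ) ^ n / n.factorial else 0 : ℝ → ℝ) =
      (Set.Ioi ξ).indicator fun t : ℝ => (t - ξ) ^ n / n.factorial := by
    ext t; simp [Set.indicator]
  rw [e]
  exact ⟨(h.intervalIntegrable a b).1.indicator measurableSet_Ioi,
    (h.intervalIntegrable a b).2.indicator measurableSet_Ioi⟩

lemma integral_truncPow_mul (n : ℕ) (ξ x : ℝ) (hξ : -1 ≤ ξ) (hx : -1 ≤ x) (f : ℝ → ℂ)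
    (hf : Continuous f) :
    ∫ t in (-1 : ℝ)..x, f t * ((if ξ < t then (t - ξ) ^ n / n.factorial else 0 : ℝ) : ℂ) =
      if ξ < x then ∫ t in ξ..x, f t * (((t - ξ) ^ n / n.factorial : ℝ) : ℂ) else 0 := by
  have h0 : ∀ y, -1 ≤ y → y ≤ ξ →
      ∫ t in (-1 : ℝ)..y, f t * ((if ξ < t then (t - ξ) ^ n / n.factorial else 0 : ℝ) : ℂ)
        = 0 := by
    intro y hy hyξ
    rw [intervalIntegral.integral_congr (g := fun _ => 0)]
    · simp
    · intro t ht
      rw [Set.uIcc_of_le hy] at ht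
      simp only
      rw [if_neg (by linarith [ht.2])]; simp
  have hintble : ∀ a b, IntervalIntegrable
      (fun t => f t * ((if ξ < t then (t - ξ) ^ n / n.factorial else 0 : ℝ) : ℂ))
      MeasureTheory.volume a b := by
    intro a b
    have := (intervalIntegrable_truncPow n ξ a b)
    have h2 : IntervalIntegrable
      (fun t => ((if ξ < t then (t - ξ) ^ n / n.factorial else 0 : ℝ) : ℂ))
      MeasureTheory.volume a b := ⟨this.1.ofReal, this.2.ofReal⟩
    exact h2.continuousOn_mul hf.continuousOn
  split_ifs with h
  · rw [← intervalIntegral.integral_add_adjacent_intervals (hintble (-1) ξ) (hintble ξ x),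
      h0 ξ hξ le_rfl, zero_add]
    refine intervalIntegral.integral_congr_ae (MeasureTheory.ae_of_all _ fun t ht => ?_)
    rw [Set.uIoc_of_le h.le] at ht
    rw [if_pos ht.1]
  · exact h0 x hx (not_lt.1 h)

lemma integral_truncPow (n : ℕ) (ξ x : ℝ) (hξ : -1 ≤ ξ) (hx : -1 ≤ x) :
    ∫ t in (-1 : ℝ)..x, (if ξ < t then (t - ξ) ^ n / n.factorial else 0 : ℝ) =
      if ξ < x then (x - ξ) ^ (n + 1) / (n + 1).factorial else 0 := by
  have h := integral_truncPow_mul n ξ x hξ hx (fun _ => 1) continuous_const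
  have h3 : ∫ t in ξ..x, ((t - ξ) ^ n / n.factorial : ℝ) =
      (x - ξ) ^ (n + 1) / (n + 1).factorial := by
    rw [intervalIntegral.integral_div,
      intervalIntegral.integral_comp_sub_right (fun t => t ^ n) ξ, integral_pow,
      Nat.factorial_succ]
    push_cast
    field_simp
    simp
  simp only [one_mul, intervalIntegral.integral_ofReal] at h
  rw [h3] at h
  split_ifs at h ⊢ <;> exact_mod_cast h

lemma integral_altSpline (s n : ℕ) (x : ℝ) (hx : -1 ≤ x) :
    ∫ t in (-1 : ℝ)..x, altSpline s n t = altSpline s (n + 1) x := by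
  unfold altSpline
  rw [intervalIntegral.integral_finsetSum]
  · refine sum_congr rfl fun j _ => ?_
    rw [intervalIntegral.integral_const_mul, integral_truncPow _ _ _ (neg_one_le_knot s j) hx]
  · intro j _
    exact (intervalIntegrable_truncPow n _ _ _).const_mul _

lemma knot_lt_cos_iff (s j m : ℕ) (hs : 0 < s) (hj : j < 2 * s) (θ : ℝ) (h0 : 0 < θ)
    (hπ : θ < π) (h1 : m * π < s * θ) (h2 : s * θ < (m + 1) * π) :
    knot s j < Real.cos θ ↔ m + 1 ≤ j ∧ j < 2 * s - m := by
  have hs' : (0 : ℝ) < s := by exact_mod_cast hs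
  have hms : m < s := by
    have : (m : ℝ) * π < s * π := h1.trans (mul_lt_mul_of_pos_left hπ hs')
    exact_mod_cast lt_of_mul_lt_mul_right this Real.pi_pos.le
  have key : ∀ i : ℕ, i ≤ s → (knot s i < Real.cos θ ↔ m + 1 ≤ i) := by
    intro i hi
    have hi' : (i : ℝ) ≤ s := by exact_mod_cast hi
    have hmem : (i * π / s : ℝ) ∈ Set.Icc 0 π := by
      refine ⟨by positivity, ?_⟩
      rw [div_le_iff₀ hs', mul_comm]
      exact mul_le_mul_of_nonneg_left hi' Real.pi_pos.le
    rw [knot, Real.strictAntiOn_cos.lt_iff_gt hmem ⟨h0.le, hπ.le⟩, lt_div_iff₀ hs', mul_comm θ]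
    constructor
    · intro h
      have : (m : ℝ) * π < i * π := h1.trans h
      exact_mod_cast lt_of_mul_lt_mul_right this Real.pi_pos.le
    · intro h
      have : (m + 1 : ℝ) ≤ i := by exact_mod_cast h
      exact h2.trans_le (mul_le_mul_of_nonneg_right this Real.pi_pos.le)
  rcases le_or_gt j s with hjs | hjs
  · rw [key j hjs]; omega
  · have : knot s j = knot s (2 * s - j) := by
      rw [knot, knot, ← Real.cos_two_pi_sub]
      congr 1
      rw [Nat.cast_sub hj.le]
      push_cast
      field_simp
    rw [this, key _ (by omega)]
    omega

lemma fspline_zero_eq (s : ℕ) (hs : 0 < s) (hev : Even s) {x : ℝ} (h1 : -1 < x) (h2 : x < 1)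
    (hk : ∀ j < 2 * s, knot s j ≠ x) : fspline s 0 x = altSpline s 0 x := by
  have hs' : (0 : ℝ) < s := by exact_mod_cast hs
  set θ := Real.arccos x with hθ
  have hcos : Real.cos θ = x := Real.cos_arccos h1.le h2.le
  have h0 : 0 < θ := Real.arccos_pos.2 h2
  have hπ : θ < π := by
    refine lt_of_le_of_ne (Real.arccos_le_pi x) fun h => ?_
    rw [h, Real.cos_pi] at hcos; linarith
  have hsin : 0 < Real.sin θ := Real.sin_pos_of_pos_of_lt_pi h0 hπ
  set m := ⌊s * θ / π⌋₊ with hm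
  have hm1 : (m : ℝ) * π ≤ s * θ := by
    rw [← le_div_iff₀ Real.pi_pos]
    exact Nat.floor_le (by positivity)
  have hm2 : s * θ < (m + 1) * π := by
    rw [← div_lt_iff₀ Real.pi_pos]
    exact Nat.lt_floor_add_one _
  have hms : m < s := by
    have : (m : ℝ) * π < s * π := hm1.trans_lt (mul_lt_mul_of_pos_left hπ hs')
    exact_mod_cast lt_of_mul_lt_mul_right this Real.pi_pos.le
  have hm1' : (m : ℝ) * π < s * θ := by
    refine lt_of_le_of_ne hm1 fun h => hk m (by omega) ?_
    rw [knot, h, ← hcos]; congr 1; field_simp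
  have hU : (Polynomial.Chebyshev.U ℝ ((s : ℤ) - 1)).eval x * Real.sin θ = Real.sin (s * θ) := by
    rw [← hcos, Polynomial.Chebyshev.U_real_cos]; push_cast; congr 1; ring
  have hsn : Real.sin (s * θ) = (-1) ^ m * Real.sin (s * θ - m * π) := by
    rw [Real.sin_sub_nat_mul_pi, ← mul_assoc, ← mul_pow]; simp
  have hpos : 0 < Real.sin (s * θ - m * π) :=
    Real.sin_pos_of_pos_of_lt_pi (by linarith) (by linarith)
  have hsign : Real.sign ((Polynomial.Chebyshev.U ℝ ((s : ℤ) - 1)).eval x) = (-1) ^ m := by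
    have e : (Polynomial.Chebyshev.U ℝ ((s : ℤ) - 1)).eval x =
        (-1) ^ m * (Real.sin (s * θ - m * π) / Real.sin θ) := by
      field_simp; rw [hU, hsn]
    have hq : 0 < Real.sin (s * θ - m * π) / Real.sin θ := div_pos hpos hsin
    rw [e]
    rcases neg_one_pow_eq_or ℝ m with h | h <;> rw [h]
    · rw [one_mul, Real.sign_of_pos hq]
    · rw [neg_one_mul, Real.sign_of_neg (by linarith)]
  have hsum : altSpline s 0 x = (-1) ^ (m + 1) := by
    have : altSpline s 0 x = ∑ j ∈ Ico (m + 1) (2 * s - m), (-1 : ℝ) ^ j := by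
      rw [altSpline]
      have e : Ico (m + 1) (2 * s - m) =
          (range (2 * s)).filter fun j => m + 1 ≤ j ∧ j < 2 * s - m := by
        ext j; simp only [mem_Ico, mem_filter, mem_range]; omega
      rw [e, sum_filter]
      refine sum_congr rfl fun j hj => ?_
      rw [← hcos]
      simp only [knot_lt_cos_iff s j m hs (mem_range.1 hj) θ h0 hπ hm1' hm2]
      split_ifs <;> simp
    rw [this, sum_Ico_eq_sum_range]
    simp_rw [pow_add _ (m + 1)]
    rw [← mul_sum, neg_one_geom_sum, if_neg, mul_one]
    rw [Nat.not_even_iff_odd]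
    exact ⟨s - m - 1, by omega⟩
  rw [hsum]
  change (-1 : ℝ) ^ (s - 1) * Real.sign _ = _
  rw [hsign, Odd.neg_one_pow (by obtain ⟨r, hr⟩ := hev; exact ⟨r - 1, by omega⟩)]
  ring

lemma fspline_eq_altSpline (s : ℕ) (hs : 0 < s) (hev : Even s) (n : ℕ) (hn : n ≠ 0) {x : ℝ}
    (h1 : -1 ≤ x) (h2 : x ≤ 1) : fspline s n x = altSpline s n x := by
  obtain ⟨k, rfl⟩ := Nat.exists_eq_succ_of_ne_zero hn
  induction k generalizing x with
  | zero =>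
    change ∫ t in (-1 : ℝ)..x, fspline s 0 t = _
    rw [← integral_altSpline s 0 x h1]
    refine intervalIntegral.integral_congr_ae ?_
    have hfin : (((range (2 * s)).image (knot s) ∪ {1} : Finset ℝ) : Set ℝ).Finite :=
      Finset.finite_toSet _
    filter_upwards [MeasureTheory.compl_mem_ae_iff.2
      (hfin.measure_zero MeasureTheory.volume)] with t ht hmem
    rw [Set.uIoc_of_le h1] at hmem
    simp only [Finset.coe_union, Finset.coe_image, Set.mem_compl_iff, Set.mem_union,
      Set.mem_image, not_or, Finset.coe_singleton, Set.mem_singleton_iff] at ht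
    refine fspline_zero_eq s hs hev hmem.1 (lt_of_le_of_ne (hmem.2.trans h2) ht.2) fun j hj h => ?_
    exact ht.1 ⟨j, by simpa using hj, h⟩
  | succ k ih =>
    change ∫ t in (-1 : ℝ)..x, fspline s (k + 1) t = _
    rw [← integral_altSpline s (k + 1) x h1]
    refine intervalIntegral.integral_congr fun t ht => ?_
    rw [Set.uIcc_of_le h1] at ht
    exact ih ht.1 (ht.2.trans h2) (by omega)

lemma integral_truncPow_succ_by_parts (n : ℕ) (ξ : ℝ) (f g : ℝ → ℂ)
    (hg : ∀ x, HasDerivAt g (f x) x) (hf : Continuous f) :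
    ∫ t in ξ..1, f t * (((t - ξ) ^ (n + 1) / (n + 1).factorial : ℝ) : ℂ) =
      g 1 * (((1 - ξ) ^ (n + 1) / (n + 1).factorial : ℝ) : ℂ) -
        ∫ t in ξ..1, g t * (((t - ξ) ^ n / n.factorial : ℝ) : ℂ) := by
  have hu : ∀ t : ℝ, HasDerivAt (fun t : ℝ => (((t - ξ) ^ (n + 1) / (n + 1).factorial : ℝ) : ℂ))
      (((t - ξ) ^ n / n.factorial : ℝ) : ℂ) t := by
    intro t
    refine HasDerivAt.ofReal_comp ?_
    have h := (((hasDerivAt_id t).sub_const ξ).pow (n + 1)).div_const ((n + 1).factorial : ℝ)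
    refine h.congr_deriv ?_
    rw [Nat.factorial_succ]
    push_cast
    simp only [id]
    field_simp
  have h := intervalIntegral.integral_mul_deriv_eq_deriv_mul (a := ξ) (b := 1)
    (u := fun t : ℝ => (((t - ξ) ^ (n + 1) / (n + 1).factorial : ℝ) : ℂ)) (v := g)
    (u' := fun t : ℝ => (((t - ξ) ^ n / n.factorial : ℝ) : ℂ)) (v' := f)
    (fun t _ => hu t) (fun t _ => hg t)
    (Continuous.intervalIntegrable (by fun_prop) _ _) (hf.intervalIntegrable _ _)
  simp only [sub_self, ne_eq, Nat.succ_ne_zero, not_false_eq_true, zero_pow, zero_div,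
    Complex.ofReal_zero, zero_mul, sub_zero] at h
  simp_rw [mul_comm (f _), mul_comm (g _)]
  exact h

lemma sum_alternating_integral (s n : ℕ) (hn : n < s) (P : ℕ → ℝ → ℂ)
    (hP : ∀ r x, HasDerivAt (P (r + 1)) (P r x) x) (hc : Continuous (P 0)) :
    ∑ j ∈ range (2 * s), (-1 : ℂ) ^ j *
        ∫ t in (knot s j)..1, P 0 t * (((t - knot s j) ^ n / n.factorial : ℝ) : ℂ) =
      (-1) ^ (n + 1) * ∑ j ∈ range (2 * s), (-1 : ℂ) ^ j * P (n + 1) (knot s j) := by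
  have hcancel : ∀ k < s, ∀ c : ℂ, ∑ j ∈ range (2 * s), (-1 : ℂ) ^ j *
      (c * (((1 - knot s j) ^ k / k.factorial : ℝ) : ℂ)) = 0 := by
    intro k hk c
    have h := congrArg ((↑) : ℝ → ℂ) (sum_alternating_one_sub_knot_pow s k hk 1)
    calc _ = c / k.factorial * ((∑ j ∈ range (2 * s), (-1 : ℝ) ^ j * (1 - knot s j) ^ k : ℝ) : ℂ) := by
          push_cast
          rw [mul_sum]
          refine sum_congr rfl fun j _ => by ring
      _ = 0 := by rw [h]; simp
  induction n generalizing P with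
  | zero =>
    have : ∀ j ∈ range (2 * s), (-1 : ℂ) ^ j *
        ∫ t in (knot s j)..1, P 0 t * (((t - knot s j) ^ 0 / Nat.factorial 0 : ℝ) : ℂ) =
        (-1 : ℂ) ^ j * (P 1 1 * (((1 - knot s j) ^ 0 / Nat.factorial 0 : ℝ) : ℂ))
          - (-1 : ℂ) ^ j * P 1 (knot s j) := by
      intro j _
      have h := intervalIntegral.integral_eq_sub_of_hasDerivAt (a := knot s j) (b := 1)
        (fun t _ => hP 0 t) (hc.intervalIntegrable _ _)
      simp only [pow_zero, Nat.factorial_zero, Nat.cast_one, div_one, Complex.ofReal_one, mul_one]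
      rw [h]
      simp only [zero_add]
      ring
    rw [sum_congr rfl this, sum_sub_distrib, hcancel 0 hn]
    simp
  | succ n ih =>
    have hc1 : Continuous (P 1) :=
      continuous_iff_continuousAt.2 fun x => (hP 0 x).continuousAt
    have : ∀ j ∈ range (2 * s), (-1 : ℂ) ^ j *
        ∫ t in (knot s j)..1, P 0 t * (((t - knot s j) ^ (n + 1) / (n + 1).factorial : ℝ) : ℂ) =
        (-1 : ℂ) ^ j * (P 1 1 * (((1 - knot s j) ^ (n + 1) / (n + 1).factorial : ℝ) : ℂ))
          - (-1 : ℂ) ^ j *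
            ∫ t in (knot s j)..1, P 1 t * (((t - knot s j) ^ n / n.factorial : ℝ) : ℂ) := by
      intro j _
      rw [integral_truncPow_succ_by_parts n (knot s j) (P 0) (P 1) (hP 0) hc]
      ring
    rw [sum_congr rfl this, sum_sub_distrib, hcancel (n + 1) hn,
      ih (by omega) (fun r => P (r + 1)) (fun r x => hP (r + 1) x) hc1]
    ring

lemma integral_mul_altSpline (s n : ℕ) (hn : n < s) (P : ℕ → ℝ → ℂ)
    (hP : ∀ r x, HasDerivAt (P (r + 1)) (P r x) x) (hc : Continuous (P 0)) :
    ∫ t in (-1 : ℝ)..1, P 0 t * (altSpline s n t : ℂ) =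
      (-1) ^ (n + 1) * ∑ j ∈ range (2 * s), (-1 : ℂ) ^ j * P (n + 1) (knot s j) := by
  rw [← sum_alternating_integral s n hn P hP hc]
  have hexp : ∀ t, P 0 t * (altSpline s n t : ℂ) = ∑ j ∈ range (2 * s), (-1 : ℂ) ^ j *
      (P 0 t * ((if knot s j < t then (t - knot s j) ^ n / n.factorial else 0 : ℝ) : ℂ)) := by
    intro t
    rw [altSpline]
    push_cast
    rw [mul_sum]
    refine sum_congr rfl fun j _ => by ring
  simp_rw [hexp]
  rw [intervalIntegral.integral_finsetSum]
  · refine sum_congr rfl fun j _ => ?_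
    rw [intervalIntegral.integral_const_mul,
      integral_truncPow_mul n _ 1 (neg_one_le_knot s j) (by norm_num) _ hc]
    split_ifs with h
    · rfl
    · have : knot s j = 1 := le_antisymm (knot_le_one s j) (not_lt.1 h)
      rw [this]; simp
  · intro j _
    have h := intervalIntegrable_truncPow n (knot s j) (-1) 1
    have h2 : IntervalIntegrable
      (fun t => ((if knot s j < t then (t - knot s j) ^ n / n.factorial else 0 : ℝ) : ℂ))
      MeasureTheory.volume (-1) 1 := ⟨h.1.ofReal, h.2.ofReal⟩
    exact (h2.continuousOn_mul hc.continuousOn).const_mul _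

/-- The Fourier transform of `t ^ l` times the compactly supported spline of order `s`. -/
noncomputable def splineFT (s l : ℕ) (w : ℝ) : ℂ :=
  ∫ t in (-1 : ℝ)..1, (t : ℂ) ^ l * Complex.exp (w * t * Complex.I) * (altSpline s (s - 1) t : ℂ)

lemma splineFT_eq (s l : ℕ) (hs : 0 < s) (hev : Even s) (w : ℝ) (P : ℕ → ℝ → ℂ)
    (hP : ∀ r x, HasDerivAt (P (r + 1)) (P r x) x)
    (h0 : ∀ t : ℝ, P 0 t = (t : ℂ) ^ l * Complex.exp (w * t * Complex.I)) :
    splineFT s l w = ∑ j ∈ range (2 * s), (-1 : ℂ) ^ j * P s (knot s j) := by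
  have hc : Continuous (P 0) := by
    rw [show P 0 = _ from funext h0]; fun_prop
  have h := integral_mul_altSpline s (s - 1) (by omega) P hP hc
  rw [Nat.sub_add_cancel hs, hev.neg_one_pow, one_mul] at h
  rw [splineFT, ← h]
  simp_rw [h0]

lemma norm_splineFT_le_of (s l : ℕ) (hs : 0 < s) (hev : Even s) (w B : ℝ) (P : ℕ → ℝ → ℂ)
    (hP : ∀ r x, HasDerivAt (P (r + 1)) (P r x) x)
    (h0 : ∀ t : ℝ, P 0 t = (t : ℂ) ^ l * Complex.exp (w * t * Complex.I))
    (hB : ∀ x : ℝ, |x| ≤ 1 → ‖P s x‖ ≤ B) : ‖splineFT s l w‖ ≤ 2 * s * B := by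
  rw [splineFT_eq s l hs hev w P hP h0]
  refine (norm_sum_le _ _).trans ?_
  have : ∀ j ∈ range (2 * s), ‖(-1 : ℂ) ^ j * P s (knot s j)‖ ≤ B := by
    intro j _
    rw [norm_mul, norm_pow, norm_neg, norm_one, one_pow, one_mul]
    exact hB _ (abs_le.2 ⟨neg_one_le_knot s j, knot_le_one s j⟩)
  refine (sum_le_card_nsmul _ _ _ this).trans ?_
  simp

lemma hasDerivAt_exp_mul_I (w x : ℝ) :
    HasDerivAt (fun t : ℝ => Complex.exp (w * t * Complex.I))
      (w * Complex.I * Complex.exp (w * x * Complex.I)) x := by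
  have h1 : HasDerivAt (fun t : ℝ => (w : ℂ) * t * Complex.I) (w * Complex.I) x := by
    have := ((hasDerivAt_id x).ofReal_comp.const_mul (w : ℂ)).mul_const Complex.I
    simpa using this
  refine h1.cexp.congr_deriv (by ring)

lemma norm_exp_mul_I (w x : ℝ) : ‖Complex.exp (w * x * Complex.I)‖ = 1 := by
  rw [← Complex.ofReal_mul, Complex.norm_exp_ofReal_mul_I]

lemma norm_splineFT_zero_le (s : ℕ) (hs : 0 < s) (hev : Even s) (w : ℝ) (hw : w ≠ 0) :
    ‖splineFT s 0 w‖ ≤ 2 * s * (1 / |w| ^ s) := by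
  have hz : (w : ℂ) * Complex.I ≠ 0 := by simp [hw]
  refine norm_splineFT_le_of s 0 hs hev w _
    (fun r x => Complex.exp (w * x * Complex.I) / (w * Complex.I) ^ r) ?_ ?_ ?_
  · intro r x
    refine ((hasDerivAt_exp_mul_I w x).div_const _).congr_deriv ?_
    rw [pow_succ]
    generalize (w : ℂ) * Complex.I = z at *
    field_simp
  · simp
  · intro x _
    rw [norm_div, norm_exp_mul_I, norm_pow, norm_mul, Complex.norm_I, mul_one, Complex.norm_real,
      Real.norm_eq_abs]

lemma norm_splineFT_one_le (s : ℕ) (hs : 0 < s) (hev : Even s) (w : ℝ) (hw : w ≠ 0) :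
    ‖splineFT s 1 w‖ ≤ 2 * s * ((1 + s / |w|) / |w| ^ s) := by
  have hz : (w : ℂ) * Complex.I ≠ 0 := by simp [hw]
  have hnz : ‖(w : ℂ) * Complex.I‖ = |w| := by simp
  refine norm_splineFT_le_of s 1 hs hev w _
    (fun r x => Complex.exp (w * x * Complex.I) / (w * Complex.I) ^ r *
      (x - r / (w * Complex.I))) ?_ ?_ ?_
  · intro r x
    refine (((hasDerivAt_exp_mul_I w x).div_const _).mul
      ((hasDerivAt_id x).ofReal_comp.sub_const _)).congr_deriv ?_
    rw [pow_succ]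
    simp only [id, Nat.cast_succ, Complex.ofReal_one]
    generalize (w : ℂ) * Complex.I = z at *
    field_simp
    ring
  · intro t; simp; ring
  · intro x hx
    rw [norm_mul, norm_div, norm_exp_mul_I, norm_pow, hnz, mul_comm, mul_one_div]
    gcongr
    refine (norm_sub_le _ _).trans ?_
    rw [norm_div, hnz, Complex.norm_real, Complex.norm_natCast, Real.norm_eq_abs]
    linarith

lemma norm_splineFT_two_le (s : ℕ) (hs : 0 < s) (hev : Even s) (w : ℝ) (hw : w ≠ 0) :
    ‖splineFT s 2 w‖ ≤ 2 * s * ((1 + 2 * s / |w| + s * (s + 1) / |w| ^ 2) / |w| ^ s) := by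
  have hz : (w : ℂ) * Complex.I ≠ 0 := by simp [hw]
  have hnz : ‖(w : ℂ) * Complex.I‖ = |w| := by simp
  refine norm_splineFT_le_of s 2 hs hev w _
    (fun r x => Complex.exp (w * x * Complex.I) / (w * Complex.I) ^ r *
      ((x : ℂ) ^ 2 - 2 * r / (w * Complex.I) * x + r * (r + 1) / (w * Complex.I) ^ 2)) ?_ ?_ ?_
  · intro r x
    have hx := (hasDerivAt_id x).ofReal_comp
    refine (((hasDerivAt_exp_mul_I w x).div_const _).mul
      (((hx.pow 2).sub (hx.const_mul _)).add_const _)).congr_deriv ?_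
    rw [pow_succ]
    simp only [id, Nat.cast_succ, Complex.ofReal_one, Pi.pow_apply, Pi.sub_apply]
    generalize (w : ℂ) * Complex.I = z at *
    field_simp
    push_cast
    ring
  · intro t; simp; ring
  · intro x hx
    rw [norm_mul, norm_div, norm_exp_mul_I, norm_pow, hnz, mul_comm, mul_one_div]
    gcongr
    refine (norm_add_le _ _).trans (add_le_add ((norm_sub_le _ _).trans (add_le_add ?_ ?_)) ?_)
    · rw [norm_pow, Complex.norm_real, Real.norm_eq_abs]
      exact pow_le_one₀ (abs_nonneg _) hx
    · rw [norm_mul, norm_div, hnz, Complex.norm_real, norm_mul, Complex.norm_natCast,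
        Real.norm_eq_abs]
      simp only [Complex.norm_ofNat]
      exact mul_le_of_le_one_right (by positivity) hx
    · rw [norm_div, norm_pow, hnz, norm_mul, Complex.norm_natCast]
      have : ‖(s : ℂ) + 1‖ = s + 1 := by
        rw [← Nat.cast_succ, Complex.norm_natCast]; push_cast; ring
      rw [this]

lemma splineFT_zero_zero (s : ℕ) (hs : 0 < s) (hev : Even s) :
    splineFT s 0 0 = ((4 / (2 ^ s * (s - 1).factorial) : ℝ) : ℂ) := by
  rw [splineFT_eq s 0 hs hev 0 (fun r x => ((x ^ r / r.factorial : ℝ) : ℂ))]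
  · have h := sum_alternating_knot_pow_self s hs
    have e : ∑ j ∈ range (2 * s), (-1 : ℂ) ^ j * ((knot s j ^ s / s.factorial : ℝ) : ℂ) =
        (((∑ j ∈ range (2 * s), (-1 : ℝ) ^ j * knot s j ^ s) / s.factorial : ℝ) : ℂ) := by
      push_cast
      rw [sum_div]
      refine sum_congr rfl fun j _ => by ring
    rw [e, h]
    congr 1
    obtain ⟨k, rfl⟩ := Nat.exists_eq_succ_of_ne_zero hs.ne'
    rw [Nat.factorial_succ]
    simp only [Nat.succ_eq_add_one, Nat.add_sub_cancel]
    push_cast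
    field_simp
  · intro r x
    refine HasDerivAt.ofReal_comp ?_
    refine (((hasDerivAt_id x).pow (r + 1)).div_const _).congr_deriv ?_
    rw [Nat.factorial_succ]
    push_cast
    simp only [id]
    field_simp
  · simp

lemma splineFT_two_zero (s : ℕ) (hs : 2 < s) (hev : Even s) :
    splineFT s 2 0 = ((2 / (2 ^ s * (s + 1) * (s - 1).factorial) : ℝ) : ℂ) := by
  rw [splineFT_eq s 2 (by omega) hev 0 (fun r x => ((2 * x ^ (r + 2) / (r + 2).factorial : ℝ) : ℂ))]
  · have h := sum_alternating_knot_pow_add_two s hs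
    have e : ∑ j ∈ range (2 * s), (-1 : ℂ) ^ j *
          ((2 * knot s j ^ (s + 2) / (s + 2).factorial : ℝ) : ℂ) =
        (((∑ j ∈ range (2 * s), (-1 : ℝ) ^ j * knot s j ^ (s + 2)) * (2 / (s + 2).factorial) : ℝ)
          : ℂ) := by
      push_cast
      rw [sum_mul]
      refine sum_congr rfl fun j _ => by ring
    rw [e, h]
    congr 1
    obtain ⟨k, rfl⟩ := Nat.exists_eq_succ_of_ne_zero (show s ≠ 0 by omega)
    rw [Nat.factorial_succ, Nat.factorial_succ, Nat.factorial_succ]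
    simp only [Nat.succ_eq_add_one, Nat.add_sub_cancel]
    push_cast
    field_simp
    ring
  · intro r x
    refine HasDerivAt.ofReal_comp ?_
    refine ((((hasDerivAt_id x).pow (r + 1 + 2)).const_mul 2).div_const _).congr_deriv ?_
    rw [show r + 1 + 2 = (r + 2) + 1 by ring, Nat.factorial_succ]
    push_cast
    simp only [id]
    field_simp
  · intro t; simp

end

section

open scoped FourierTransform
open Finset

lemma integral_eq_intervalIntegral_of_support {f : ℝ → ℂ} (h1 : ∀ x ≤ -1, f x = 0)
    (h2 : ∀ x, 1 ≤ x → f x = 0) : ∫ x, f x = ∫ x in (-1 : ℝ)..1, f x := by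
  rw [intervalIntegral.integral_of_le (by norm_num)]
  refine (MeasureTheory.setIntegral_eq_integral_of_forall_compl_eq_zero fun x hx => ?_).symm
  rw [Set.mem_Ioc, not_and_or, not_lt, not_le] at hx
  rcases hx with hx | hx
  · exact h1 x hx
  · exact h2 x hx.le

lemma poisson_summation_compact {H : ℝ → ℂ} (hc : Continuous H) (h1 : ∀ x ≤ -1, H x = 0)
    (h2 : ∀ x, 1 ≤ x → H x = 0) (N : ℕ) (t : ℝ)
    (hsum : Summable fun n : ℤ => ∫ y in (-1 : ℝ)..1,
      Complex.exp ((((N + 1) * (t - 2 * π * n) : ℝ) : ℂ) * y * Complex.I) * H y) :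
    ∑ k ∈ Icc (-(N : ℤ)) N, H (k / (N + 1)) * Complex.exp (k * t * Complex.I) =
      (N + 1) * ∑' n : ℤ, ∫ y in (-1 : ℝ)..1,
        Complex.exp ((((N + 1) * (t - 2 * π * n) : ℝ) : ℂ) * y * Complex.I) * H y := by
  have hN : (0 : ℝ) < N + 1 := by positivity
  set f : ℝ → ℂ := fun x => H (x / (N + 1)) * Complex.exp (x * t * Complex.I) with hf
  have hfc : Continuous f := by
    refine Continuous.mul (hc.comp (by fun_prop)) (by fun_prop)
  have hf0 : ∀ x : ℝ, (N : ℝ) + 1 ≤ |x| → f x = 0 := by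
    intro x hx
    simp only [hf]
    rcases le_abs.1 hx with h | h
    · rw [h2 _ (by rw [le_div_iff₀ hN]; linarith), zero_mul]
    · rw [h1 _ (by rw [div_le_iff₀ hN]; linarith), zero_mul]
  have hF : ∀ n : ℤ, 𝓕 f n = (N + 1) * ∫ y in (-1 : ℝ)..1,
      Complex.exp ((((N + 1) * (t - 2 * π * n) : ℝ) : ℂ) * y * Complex.I) * H y := by
    intro n
    rw [Real.fourier_real_eq_integral_exp_smul]
    rw [← integral_eq_intervalIntegral_of_support (f := fun y : ℝ =>
      Complex.exp ((((N + 1) * (t - 2 * π * n) : ℝ) : ℂ) * y * Complex.I) * H y)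
      (fun x hx => by simp only [h1 x hx, mul_zero]) (fun x hx => by simp only [h2 x hx, mul_zero])]
    have h := MeasureTheory.Measure.integral_comp_div (fun y : ℝ =>
      Complex.exp ((((N + 1) * (t - 2 * π * n) : ℝ) : ℂ) * y * Complex.I) * H y) ((N : ℝ) + 1)
    rw [abs_of_pos hN, Complex.real_smul] at h
    push_cast at h ⊢
    rw [← h]
    congr 1
    ext v
    simp only [hf, smul_eq_mul]
    rw [mul_comm (H _), ← mul_assoc, ← Complex.exp_add]
    congr 2
    have : (N : ℂ) + 1 ≠ 0 := by exact_mod_cast hN.ne'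
    field_simp
    ring
  have hP := Real.tsum_eq_tsum_fourier_of_rpow_decay_of_summable hfc one_lt_two (f := f) ?_ ?_ 0
  · have hl : ∑' n : ℤ, f (0 + n) = ∑ k ∈ Icc (-(N : ℤ)) N, f k := by
      rw [tsum_eq_sum (s := Icc (-(N : ℤ)) N)]
      · simp
      · intro k hk
        rw [zero_add]
        apply hf0
        rw [mem_Icc, not_and_or] at hk
        have : (N : ℤ) + 1 ≤ |k| := by
          rcases hk with h | h
          · exact le_abs.2 (Or.inr (by omega))
          · exact le_abs.2 (Or.inl (by omega))
        exact_mod_cast this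
    rw [hl] at hP
    simp only [hf] at hP
    push_cast at hP ⊢
    rw [hP]
    simp only [fourier_eval_zero, mul_one]
    rw [← tsum_mul_left]
    refine tsum_congr fun n => ?_
    have := hF n
    push_cast at this
    exact this
  · refine (Filter.EventuallyEq.trans_isBigO (f₂ := fun _ => (0 : ℂ)) ?_
      (Asymptotics.isBigO_zero _ _))
    have : ∀ᶠ x : ℝ in Filter.cocompact ℝ, (N : ℝ) + 1 ≤ |x| := by
      have := tendsto_norm_cocompact_atTop (E := ℝ)
      exact this.eventually_ge_atTop _
    filter_upwards [this] with x hx using hf0 x hx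
  · simp_rw [hF]
    exact hsum.mul_left _

lemma summable_one_div_add_two_pow (s : ℕ) (hs : 6 ≤ s) :
    Summable fun k : ℕ => (1 : ℝ) / (k + 2) ^ s := by
  have h := (summable_nat_add_iff 2).2 (Real.summable_one_div_nat_pow.2 (show 1 < s by omega))
  refine h.congr fun k => by push_cast; rfl

lemma tsum_one_div_add_two_pow_le (s : ℕ) (hs : 6 ≤ s) :
    ∑' k : ℕ, (1 : ℝ) / (k + 2) ^ s ≤ 0.021 := by
  have h4 := hasSum_zeta_four
  have h4' := (hasSum_nat_add_iff' 2).2 h4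
  have hle : ∀ k : ℕ, (1 : ℝ) / (k + 2) ^ s ≤ 1 / 4 * (1 / ((k + 2 : ℕ) : ℝ) ^ 4) := by
    intro k
    have hk : (2 : ℝ) ≤ k + 2 := by linarith [(Nat.cast_nonneg k : (0 : ℝ) ≤ k)]
    have e : (k + 2 : ℝ) ^ s = (k + 2 : ℝ) ^ (s - 4) * (k + 2 : ℝ) ^ 4 := by
      rw [← pow_add]; congr 1; omega
    have h5 : (4 : ℝ) ≤ (k + 2 : ℝ) ^ (s - 4) := by
      calc (4 : ℝ) = 2 ^ 2 := by norm_num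
        _ ≤ 2 ^ (s - 4) := pow_le_pow_right₀ (by norm_num) (by omega)
        _ ≤ _ := by gcongr
    push_cast
    rw [e, one_div_mul_one_div]
    exact one_div_le_one_div_of_le (by positivity) (by gcongr)
  have h5 := (summable_one_div_add_two_pow s hs).tsum_le_tsum hle (h4'.mul_left _).summable
  rw [(h4'.mul_left _).tsum_eq] at h5
  refine h5.trans ?_
  have hpi : π ^ 4 ≤ 97.42 := by
    have h1 : π ≤ 3.1416 := Real.pi_lt_d4.le
    calc π ^ 4 ≤ 3.1416 ^ 4 := by gcongr
      _ ≤ _ := by norm_num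
  simp only [Finset.sum_range_succ, Finset.sum_range_zero]
  norm_num
  linarith

/-- The weight of the nonzero translates in a periodised kernel of decay `s`. -/
noncomputable def imageTail (s : ℕ) (t : ℝ) : ℝ := 1 / (2 * π - t) ^ s + 0.021 / π ^ s

lemma summable_and_norm_tsum_le_of_shifted (s : ℕ) (hs : 6 ≤ s) (t : ℝ) (h0 : 0 ≤ t)
    (hπ : t ≤ π) (a : ℤ → ℂ) (D : ℝ) (hD : 0 ≤ D)
    (ha : ∀ n : ℤ, n ≠ 0 → ‖a n‖ ≤ D / |t - 2 * π * n| ^ s) :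
    Summable (fun m : ℕ => a ((m : ℤ) + 2)) ∧ Summable (fun m : ℕ => a (-((m : ℤ) + 1))) ∧
    ‖∑' m : ℕ, a ((m : ℤ) + 2)‖ + ‖∑' m : ℕ, a (-((m : ℤ) + 1))‖ ≤ D * (0.021 / π ^ s) := by
  have hπ0 := Real.pi_pos
  have hS := summable_one_div_add_two_pow s hs
  have hle := tsum_one_div_add_two_pow_le s hs
  generalize hf : (fun k : ℕ => (1 : ℝ) / (k + 2) ^ s) = f at hS hle
  have hfk : ∀ k : ℕ, f k = (1 : ℝ) / (k + 2) ^ s := fun k => by rw [← hf]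
  have hE : Summable fun k : ℕ => f (2 * k) :=
    hS.comp_injective (i := fun k : ℕ => 2 * k) fun a b h => by simpa using h
  have hO : Summable fun k : ℕ => f (2 * k + 1) :=
    hS.comp_injective (i := fun k : ℕ => 2 * k + 1) fun a b h => by simpa using h
  have hEO := tsum_even_add_odd hE hO
  have hpos : ∀ m : ℕ, ‖a ((m : ℤ) + 2)‖ ≤ D / π ^ s * f (2 * m + 1) := by
    intro m
    refine (ha _ (by omega)).trans ?_
    rw [hfk, div_mul_div_comm, mul_one, ← mul_pow]
    have : π * (((2 * m + 1 : ℕ) : ℝ) + 2) ≤ |t - 2 * π * (((m : ℤ) + 2 : ℤ) : ℝ)| := by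
      rw [abs_sub_comm]
      refine le_trans ?_ (le_abs_self _)
      push_cast
      linarith
    exact div_le_div_of_nonneg_left hD (by positivity) (pow_le_pow_left₀ (by positivity) this s)
  have hneg : ∀ m : ℕ, ‖a (-((m : ℤ) + 1))‖ ≤ D / π ^ s * f (2 * m) := by
    intro m
    refine (ha _ (by omega)).trans ?_
    rw [hfk, div_mul_div_comm, mul_one, ← mul_pow]
    have : π * (((2 * m : ℕ) : ℝ) + 2) ≤ |t - 2 * π * ((-((m : ℤ) + 1) : ℤ) : ℝ)| := by
      refine le_trans ?_ (le_abs_self _)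
      push_cast
      linarith
    exact div_le_div_of_nonneg_left hD (by positivity) (pow_le_pow_left₀ (by positivity) this s)
  refine ⟨Summable.of_norm_bounded (hO.mul_left _) hpos,
    Summable.of_norm_bounded (hE.mul_left _) hneg, ?_⟩
  have n2 := tsum_of_norm_bounded (hO.mul_left (D / π ^ s)).hasSum hpos
  have n3 := tsum_of_norm_bounded (hE.mul_left (D / π ^ s)).hasSum hneg
  rw [tsum_mul_left] at n2 n3
  calc _ ≤ D / π ^ s * (∑' k, f (2 * k) + ∑' k, f (2 * k + 1)) := by linarith
    _ ≤ D / π ^ s * 0.021 := by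
        rw [hEO]; exact mul_le_mul_of_nonneg_left hle (by positivity)
    _ = _ := by ring

lemma summable_and_norm_tsum_sub_le (s : ℕ) (hs : 6 ≤ s) (t : ℝ) (h0 : 0 ≤ t) (hπ : t ≤ π)
    (a : ℤ → ℂ) (D : ℝ) (hD : 0 ≤ D) (ha : ∀ n : ℤ, n ≠ 0 → ‖a n‖ ≤ D / |t - 2 * π * n| ^ s) :
    Summable a ∧ ‖∑' n, a n - a 0‖ ≤ D * imageTail s t := by
  have hπ0 := Real.pi_pos
  obtain ⟨hsp, hsn, hle⟩ := summable_and_norm_tsum_le_of_shifted s hs t h0 hπ a D hD ha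
  have hsp' : Summable fun m : ℕ => a (m : ℤ) :=
    (summable_nat_add_iff 2).1 (hsp.congr fun m => by push_cast; rfl)
  refine ⟨Summable.of_nat_of_neg_add_one hsp' hsn, ?_⟩
  have e1 := hsp'.sum_add_tsum_nat_add 2
  have e2 : ∑' m : ℕ, a ((m + 2 : ℕ) : ℤ) = ∑' m : ℕ, a ((m : ℤ) + 2) :=
    tsum_congr fun m => by push_cast; rfl
  rw [e2, sum_range_succ, sum_range_one] at e1
  rw [tsum_of_nat_of_neg_add_one hsp' hsn, ← e1]
  have n1 : ‖a 1‖ ≤ D * (1 / (2 * π - t) ^ s) := by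
    refine (ha 1 one_ne_zero).trans (le_of_eq ?_)
    rw [abs_sub_comm]; push_cast
    rw [mul_one, abs_of_nonneg (by linarith)]; ring
  generalize ∑' m : ℕ, a ((m : ℤ) + 2) = X at *
  generalize ∑' m : ℕ, a (-((m : ℤ) + 1)) = Y at *
  have e : a ((0 : ℕ) : ℤ) + a ((1 : ℕ) : ℤ) + X + Y - a 0 = a 1 + (X + Y) := by
    push_cast; ring
  rw [e, imageTail, mul_add]
  calc _ ≤ ‖a 1‖ + (‖X‖ + ‖Y‖) :=
        (norm_add_le _ _).trans (add_le_add_right (norm_add_le _ _) _)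
    _ ≤ _ := add_le_add n1 hle

end

section

open Finset

/-- The sampled spline moments `∑ (k/(N+1))^l g(k/(N+1)) e^{ikt}`. -/
noncomputable def momentSum (s N l : ℕ) (t : ℝ) : ℂ :=
  ∑ k ∈ Icc (-(N : ℤ)) N, (((((k : ℝ) / (N + 1)) ^ l * altSpline s (s - 1) (k / (N + 1)) : ℝ)) : ℂ) *
    Complex.exp (k * t * Complex.I)

lemma gtilde_eq_altSpline (s N : ℕ) (hs : 6 ≤ s) (hev : Even s) (k : ℤ)
    (hk : k ∈ Icc (-(N : ℤ)) N) :
    gtilde s ((k : ℝ) / (2 * ((N : ℝ) + 1))) = altSpline s (s - 1) (k / (N + 1)) := by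
  have hN : (0 : ℝ) < N + 1 := by positivity
  rw [mem_Icc] at hk
  have h1 : (-(N : ℝ)) ≤ k := by exact_mod_cast hk.1
  have h2 : (k : ℝ) ≤ N := by exact_mod_cast hk.2
  rw [gtilde, show 2 * ((k : ℝ) / (2 * ((N : ℝ) + 1))) = k / (N + 1) by field_simp]
  refine fspline_eq_altSpline s (by omega) hev _ (by omega) ?_ ?_
  · rw [le_div_iff₀ hN]; linarith
  · rw [div_le_iff₀ hN]; linarith

lemma norm_momentSum_sub_le (s N l : ℕ) (hs : 6 ≤ s) (t : ℝ) (h0 : 0 ≤ t)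
    (hπ : t ≤ π) (β : ℝ) (hβ : 0 ≤ β)
    (hFT : ∀ w : ℝ, (N + 1) * π ≤ |w| → ‖splineFT s l w‖ ≤ 2 * s * (β / |w| ^ s)) :
    ‖momentSum s N l t - (N + 1) * splineFT s l ((N + 1) * t)‖ ≤
      (N + 1) * (2 * s * β / (N + 1) ^ s * imageTail s t) := by
  have hπ0 := Real.pi_pos
  have hN : (0 : ℝ) < N + 1 := by positivity
  have key := summable_and_norm_tsum_sub_le s hs t h0 hπ
    (fun n : ℤ => splineFT s l ((N + 1) * (t - 2 * π * n))) (2 * s * β / (N + 1) ^ s)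
    (by positivity) (by
      intro n hn
      have h1 : π ≤ |t - 2 * π * n| := by
        rcases lt_or_gt_of_ne hn with h | h
        · have h' : (n : ℝ) ≤ -1 := by exact_mod_cast Int.le_sub_one_of_lt h
          refine le_trans ?_ (le_abs_self _)
          nlinarith
        · have h' : (1 : ℝ) ≤ n := by exact_mod_cast h
          refine le_trans ?_ (neg_le_abs _)
          nlinarith
      have h2 : |((N : ℝ) + 1) * (t - 2 * π * n)| = (N + 1) * |t - 2 * π * n| := by
        rw [abs_mul, abs_of_pos hN]
      refine (hFT _ (by rw [h2]; gcongr)).trans (le_of_eq ?_)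
      rw [h2, mul_pow]
      have : |t - 2 * π * n| ≠ 0 := by linarith
      field_simp)
  have hH : ∀ n : ℤ, ∫ y in (-1 : ℝ)..1,
      Complex.exp ((((N + 1) * (t - 2 * π * n) : ℝ) : ℂ) * y * Complex.I) *
        ((y ^ l * altSpline s (s - 1) y : ℝ) : ℂ) =
      splineFT s l ((N + 1) * (t - 2 * π * n)) := by
    intro n
    rw [splineFT]
    refine intervalIntegral.integral_congr fun y _ => ?_
    push_cast
    ring
  have hP := poisson_summation_compact (H := fun y => ((y ^ l * altSpline s (s - 1) y : ℝ) : ℂ))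
    (Complex.continuous_ofReal.comp ((continuous_id.pow l).mul
      (continuous_altSpline s (s - 1) (by omega))))
    (fun x hx => by simp [altSpline_of_le_neg_one s (s - 1) hx])
    (fun x hx => by simp [altSpline_of_one_le s (s - 1) (by omega) (by omega) hx]) N t
    (by simp_rw [hH]; exact key.1)
  simp_rw [hH] at hP
  rw [momentSum, hP, ← mul_sub, norm_mul]
  have e : ‖(N : ℂ) + 1‖ = N + 1 := by
    rw [show (N : ℂ) + 1 = ((N + 1 : ℝ) : ℂ) by push_cast; rfl, Complex.norm_real,
      Real.norm_of_nonneg hN.le]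
  rw [e]
  have h3 := key.2
  simp only [Int.cast_zero, mul_zero, sub_zero] at h3
  gcongr

lemma pow_mul_imageTail_le (s : ℕ) (t : ℝ) (h0 : 0 ≤ t) (hπ : t ≤ π) :
    t ^ s * imageTail s t ≤ 1.021 := by
  have hπ0 := Real.pi_pos
  have h1 : (t / (2 * π - t)) ^ s ≤ 1 :=
    pow_le_one₀ (div_nonneg h0 (by linarith)) ((div_le_one (by linarith)).2 (by linarith))
  have h2 : (t / π) ^ s ≤ 1 := pow_le_one₀ (by positivity) ((div_le_one hπ0).2 hπ)
  rw [imageTail, mul_add, mul_one_div, ← div_pow, mul_div_left_comm, ← div_pow]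
  linarith

lemma imageTail_zero_le (s : ℕ) (hs : 6 ≤ s) : imageTail s 0 ≤ 0.037 / π ^ s := by
  have h : (64 : ℝ) ≤ 2 ^ s := by
    calc (64 : ℝ) = 2 ^ 6 := by norm_num
      _ ≤ _ := pow_le_pow_right₀ (by norm_num) hs
  have h1 : 1 / (2 * π - 0) ^ s ≤ 1 / 64 * (1 / π ^ s) := by
    rw [sub_zero, mul_pow, one_div_mul_one_div]
    gcongr
  have : 0 < π ^ s := by positivity
  rw [imageTail]
  calc _ ≤ 1 / 64 * (1 / π ^ s) + 0.021 / π ^ s := by gcongr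
    _ = (1 / 64 + 0.021) / π ^ s := by ring
    _ ≤ _ := by gcongr; norm_num

lemma factorial_mul_two_pow_div_le (s N : ℕ) (hs : 6 ≤ s) (hN : 2 * s ≤ N) :
    (s + 1) * (s.factorial * 2 ^ s / ((N + 1) * π) ^ s) ≤ (7 / 900 : ℝ) := by
  have hs' : (6 : ℝ) ≤ s := by exact_mod_cast hs
  have hN' : (2 * s : ℝ) ≤ N + 1 := by exact_mod_cast hN.trans (Nat.le_succ N)
  have hf : (s.factorial : ℝ) ≤ s ^ s := by exact_mod_cast Nat.factorial_le_pow s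
  have hπ3 := Real.pi_gt_d2
  have h1 : (s.factorial * 2 ^ s : ℝ) ≤ (N + 1) ^ s := by
    calc (s.factorial * 2 ^ s : ℝ) ≤ s ^ s * 2 ^ s := by gcongr
      _ = (2 * s) ^ s := by rw [← mul_pow, mul_comm]
      _ ≤ _ := by gcongr
  have h2 : ((s : ℝ) + 1) * 900 ≤ 7 * π ^ s := by
    have e : π ^ s = π ^ (s - 6) * π ^ 6 := by rw [← pow_add]; congr 1; omega
    have h6 : (900 : ℝ) ≤ π ^ 6 := by
      calc (900 : ℝ) ≤ 3.14 ^ 6 := by norm_num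
        _ ≤ _ := by gcongr
    have hb : (1 : ℝ) + (s - 6 : ℕ) * 2 ≤ π ^ (s - 6) := by
      calc (1 : ℝ) + (s - 6 : ℕ) * 2 ≤ (1 + 2) ^ (s - 6) :=
            one_add_mul_le_pow (by norm_num) _
        _ ≤ _ := by gcongr; linarith
    rw [Nat.cast_sub hs] at hb
    push_cast at hb
    have h7 : ((s : ℝ) + 1) ≤ 7 * π ^ (s - 6) := by linarith
    rw [e]
    nlinarith
  rw [mul_pow, ← mul_div_assoc, div_le_iff₀ (by positivity)]
  have : 0 < ((N : ℝ) + 1) ^ s := by positivity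
  nlinarith

/-- The total mass of the perfect B-spline. -/
noncomputable def splineMass (s : ℕ) : ℝ := 4 / (2 ^ s * (s - 1).factorial)

lemma splineMass_pos (s : ℕ) : 0 < splineMass s := by unfold splineMass; positivity

lemma splineMass_mul_factorial (s : ℕ) (hs : 6 ≤ s) :
    splineMass s * (s.factorial * 2 ^ s) = 4 * s := by
  obtain ⟨k, rfl⟩ : ∃ k, s = k + 1 := ⟨s - 1, by omega⟩
  rw [splineMass, Nat.factorial_succ, Nat.add_sub_cancel]
  have : (k.factorial : ℝ) ≠ 0 := by positivity
  push_cast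
  field_simp

lemma six_mul_le_abs (s N : ℕ) (hN : 2 * s ≤ N) (w : ℝ) (hw : (N + 1) * π ≤ |w|) :
    6 * s ≤ |w| := by
  have hN' : (2 * s : ℝ) ≤ N + 1 := by exact_mod_cast hN.trans (Nat.le_succ N)
  refine le_trans ?_ hw
  nlinarith [Real.pi_gt_three, (Nat.cast_nonneg s : (0 : ℝ) ≤ s)]

lemma splineFT_bound_zero (s N : ℕ) (hs : 6 ≤ s) (hev : Even s) (hN : 2 * s ≤ N) (w : ℝ)
    (hw : (N + 1) * π ≤ |w|) : ‖splineFT s 0 w‖ ≤ 2 * s * (1 / |w| ^ s) := by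
  have hs' : (6 : ℝ) ≤ s := by exact_mod_cast hs
  have h := six_mul_le_abs s N hN w hw
  exact norm_splineFT_zero_le s (by omega) hev w (abs_pos.1 (by linarith))

lemma splineFT_bound_one (s N : ℕ) (hs : 6 ≤ s) (hev : Even s) (hN : 2 * s ≤ N) (w : ℝ)
    (hw : (N + 1) * π ≤ |w|) : ‖splineFT s 1 w‖ ≤ 2 * s * (1.17 / |w| ^ s) := by
  have hs' : (6 : ℝ) ≤ s := by exact_mod_cast hs
  have h := six_mul_le_abs s N hN w hw
  refine (norm_splineFT_one_le s (by omega) hev w (abs_pos.1 (by linarith))).trans ?_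
  have h1 : s / |w| ≤ 0.17 := by rw [div_le_iff₀ (by linarith)]; linarith
  gcongr
  linarith

lemma splineFT_bound_two (s N : ℕ) (hs : 6 ≤ s) (hev : Even s) (hN : 2 * s ≤ N) (w : ℝ)
    (hw : (N + 1) * π ≤ |w|) : ‖splineFT s 2 w‖ ≤ 2 * s * (1.37 / |w| ^ s) := by
  have hs' : (6 : ℝ) ≤ s := by exact_mod_cast hs
  have h := six_mul_le_abs s N hN w hw
  refine (norm_splineFT_two_le s (by omega) hev w (abs_pos.1 (by linarith))).trans ?_
  have h1 : 2 * s / |w| ≤ 0.335 := by rw [div_le_iff₀ (by linarith)]; linarith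
  have h2 : (s : ℝ) * (s + 1) / |w| ^ 2 ≤ 0.035 := by
    rw [div_le_iff₀ (by nlinarith)]; nlinarith
  gcongr
  linarith

lemma tail_zero_le (s N : ℕ) (hs : 6 ≤ s) (β : ℝ) (hβ : 0 ≤ β) :
    2 * s * β / (N + 1) ^ s * imageTail s 0 ≤
      splineMass s * (β * 0.0185 * (s.factorial * 2 ^ s / ((N + 1) * π) ^ s)) := by
  have h := imageTail_zero_le s hs
  calc _ ≤ 2 * s * β / (N + 1) ^ s * (0.037 / π ^ s) := by gcongr
    _ = (splineMass s * (s.factorial * 2 ^ s)) * (β * 0.0185 / ((N + 1) * π) ^ s) := by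
        rw [splineMass_mul_factorial s hs, mul_pow]; field_simp; norm_num; ring
    _ = _ := by ring

lemma momentSum_zero_re (s N l : ℕ) : (momentSum s N l 0).re =
    ∑ k ∈ Icc (-(N : ℤ)) N, ((k : ℝ) / (N + 1)) ^ l * altSpline s (s - 1) (k / (N + 1)) := by
  simp [momentSum]
  norm_cast

lemma gnorm_eq_re (s N : ℕ) (hs : 6 ≤ s) (hev : Even s) :
    gnorm s N = (momentSum s N 0 0).re := by
  rw [momentSum_zero_re, gnorm]
  exact sum_congr rfl fun k hk => by rw [gtilde_eq_altSpline s N hs hev k hk, pow_zero, one_mul]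

lemma abs_gnorm_sub_le (s N : ℕ) (hs : 6 ≤ s) (hev : Even s) (hN : 2 * s ≤ N) :
    |gnorm s N - (N + 1) * splineMass s| ≤
      (N + 1) * (splineMass s * (0.0185 * (s.factorial * 2 ^ s / ((N + 1) * π) ^ s))) := by
  have h := norm_momentSum_sub_le s N 0 hs 0 le_rfl Real.pi_pos.le 1 zero_le_one
    (splineFT_bound_zero s N hs hev hN)
  rw [mul_zero, splineFT_zero_zero s (by omega) hev] at h
  have h2 := (Complex.abs_re_le_norm _).trans h
  have h3 := tail_zero_le s N hs 1 zero_le_one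
  rw [one_mul] at h3
  rw [Complex.sub_re, ← gnorm_eq_re s N hs hev,
    show ((N : ℂ) + 1) = ((N + 1 : ℝ) : ℂ) by push_cast; rfl, ← Complex.ofReal_mul,
    Complex.ofReal_re] at h2
  exact h2.trans (by gcongr)

lemma gnorm_bounds (s N : ℕ) (hs : 6 ≤ s) (hev : Even s) (hN : 2 * s ≤ N) :
    (N + 1) * splineMass s * (1 - 0.0001) ≤ gnorm s N ∧
    gnorm s N ≤ (N + 1) * splineMass s *
      (1 + 0.0185 * (s.factorial * 2 ^ s / ((N + 1) * π) ^ s)) := by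
  have h := abs_le.1 (abs_gnorm_sub_le s N hs hev hN)
  have hτ := factorial_mul_two_pow_div_le s N hs hN
  have hs' : (6 : ℝ) ≤ s := by exact_mod_cast hs
  have hA := splineMass_pos s
  generalize (s.factorial * 2 ^ s / ((N + 1) * π) ^ s : ℝ) = τ at *
  have hτ' : τ ≤ 1 / 900 := by nlinarith
  have hNA : 0 < (N + 1) * splineMass s := by positivity
  constructor <;> nlinarith

lemma gnorm_pos (s N : ℕ) (hs : 6 ≤ s) (hev : Even s) (hN : 2 * s ≤ N) : 0 < gnorm s N := by
  have h := (gnorm_bounds s N hs hev hN).1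
  have hNA : 0 < (N + 1) * splineMass s := by have := splineMass_pos s; positivity
  nlinarith

lemma second_moment_ge (s N : ℕ) (hs : 6 ≤ s) (hev : Even s) (hN : 2 * s ≤ N) :
    0.999 / (2 * ((s : ℝ) + 1)) ≤ (momentSum s N 2 0).re / gnorm s N := by
  have h := norm_momentSum_sub_le s N 2 hs 0 le_rfl Real.pi_pos.le 1.37 (by norm_num)
    (splineFT_bound_two s N hs hev hN)
  rw [mul_zero, splineFT_two_zero s (by omega) hev] at h
  have h2 := (Complex.abs_re_le_norm _).trans h
  have h3 := tail_zero_le s N hs 1.37 (by norm_num)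
  rw [Complex.sub_re, show ((N : ℂ) + 1) = ((N + 1 : ℝ) : ℂ) by push_cast; rfl,
    ← Complex.ofReal_mul, Complex.ofReal_re] at h2
  have e : (2 / (2 ^ s * (s + 1) * (s - 1).factorial) : ℝ) =
      splineMass s * (1 / (2 * (s + 1))) := by
    rw [splineMass]; field_simp; norm_num
  rw [e] at h2
  have h4 := (abs_le.1 h2).1
  have hg := gnorm_bounds s N hs hev hN
  have hτ := factorial_mul_two_pow_div_le s N hs hN
  have hs' : (6 : ℝ) ≤ s := by exact_mod_cast hs
  have hA := splineMass_pos s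
  have hτ0 : (0 : ℝ) ≤ s.factorial * 2 ^ s / ((N + 1) * π) ^ s := by positivity
  rw [le_div_iff₀ (gnorm_pos s N hs hev hN)]
  generalize (s.factorial * 2 ^ s / ((N + 1) * π) ^ s : ℝ) = τ at *
  have hτ' : τ ≤ 1 / 900 := by nlinarith
  have hN1 : (0 : ℝ) < N + 1 := by positivity
  calc 0.999 / (2 * ((s : ℝ) + 1)) * gnorm s N
      ≤ 0.999 / (2 * ((s : ℝ) + 1)) * ((N + 1) * splineMass s * (1 + 0.0185 * τ)) := by
        gcongr; exact hg.2
    _ = (N + 1) * (splineMass s * (1 / (2 * (s + 1)) * (0.999 * (1 + 0.0185 * τ)))) := by ring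
    _ ≤ (N + 1) * (splineMass s * (1 / (2 * (s + 1)) - 1.37 * 0.0185 * τ)) := by
        gcongr
        rw [show 1 / (2 * ((s : ℝ) + 1)) - 1.37 * 0.0185 * τ =
          1 / (2 * ((s : ℝ) + 1)) * (1 - 1.37 * 0.0185 * 2 * ((s + 1) * τ)) by field_simp]
        gcongr
        linarith
    _ = (N + 1) * (splineMass s * (1 / (2 * (s + 1)))) -
        (N + 1) * (splineMass s * (1.37 * 0.0185 * τ)) := by ring
    _ ≤ (N + 1) * (splineMass s * (1 / (2 * (s + 1)))) -
        (N + 1) * (2 * s * 1.37 / (N + 1) ^ s * imageTail s 0) := by gcongr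
    _ ≤ _ := by linarith

/-- Reduction of a kernel bound to the scalar inequality for the decay profile. -/
lemma norm_momentSum_div_le (s N l : ℕ) (hs : 6 ≤ s) (hev : Even s) (hN : 2 * s ≤ N) (t : ℝ)
    (h0 : 0 < t) (hπ : t ≤ π) (β B Q : ℝ) (hβ : 0 ≤ β)
    (hFT : ∀ w : ℝ, (N + 1) * π ≤ |w| → ‖splineFT s l w‖ ≤ 2 * s * (β / |w| ^ s))
    (hB : ‖splineFT s l ((N + 1) * t)‖ ≤ 2 * s * (B / ((N + 1) * t) ^ s))
    (hQ : s * (B + β * 1.021) ≤ 2 * Q * (1 - 0.0001)) :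
    ‖momentSum s N l t‖ / gnorm s N ≤
      Q * ((s - 1).factorial * 2 ^ s / ((N + 1) * t) ^ s) := by
  have h := norm_momentSum_sub_le s N l hs t h0.le hπ β hβ hFT
  have hN1 : (0 : ℝ) < N + 1 := by positivity
  have e : ‖(N : ℂ) + 1‖ = N + 1 := by
    rw [show (N : ℂ) + 1 = ((N + 1 : ℝ) : ℂ) by push_cast; rfl, Complex.norm_real,
      Real.norm_of_nonneg hN1.le]
  have h1 : ‖momentSum s N l t‖ ≤ (N + 1) * (2 * s * β / (N + 1) ^ s * imageTail s t) +
      (N + 1) * (2 * s * (B / ((N + 1) * t) ^ s)) := by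
    have h2 := norm_add_le (momentSum s N l t - (N + 1) * splineFT s l ((N + 1) * t))
      ((N + 1) * splineFT s l ((N + 1) * t))
    rw [sub_add_cancel, norm_mul, e] at h2
    exact h2.trans (add_le_add h (by gcongr))
  have hA := splineMass_pos s
  have hr := pow_mul_imageTail_le s t h0.le hπ
  rw [div_le_iff₀ (gnorm_pos s N hs hev hN)]
  have hw : 0 < ((N + 1) * t) ^ s := by positivity
  have hQ0 : splineMass s * ((s - 1).factorial * 2 ^ s) = 4 := by
    rw [splineMass]; field_simp
  have hQ' : 0 ≤ Q := by
    by_contra hc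
    have : 0 ≤ B := by
      by_contra hB'
      have h5 : B / ((N + 1) * t) ^ s < 0 := div_neg_of_neg_of_pos (by linarith) hw
      have h6 : (0 : ℝ) < 2 * s := by positivity
      nlinarith [norm_nonneg (splineFT s l ((N + 1) * t))]
    have : 0 ≤ s * (B + β * 1.021) := by positivity
    linarith
  calc _ ≤ _ := h1
    _ = (N + 1) * (2 / ((N + 1) * t) ^ s) * (s * (B + β * (t ^ s * imageTail s t))) := by
        rw [mul_pow]; field_simp; ring
    _ ≤ (N + 1) * (2 / ((N + 1) * t) ^ s) * (2 * Q * (1 - 0.0001)) := by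
        refine mul_le_mul_of_nonneg_left (le_trans ?_ hQ) (by positivity)
        gcongr
    _ = Q * ((s - 1).factorial * 2 ^ s / ((N + 1) * t) ^ s) *
        ((N + 1) * splineMass s * (1 - 0.0001)) := by
        rw [show Q * ((s - 1).factorial * 2 ^ s / ((N + 1) * t) ^ s) *
        ((N + 1) * splineMass s * (1 - 0.0001)) = Q * (splineMass s * ((s - 1).factorial * 2 ^ s)) *
          (N + 1) * (1 - 0.0001) / ((N + 1) * t) ^ s by ring, hQ0]
        ring
    _ ≤ _ := by
        gcongr
        exact (gnorm_bounds s N hs hev hN).1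

end

section

open Finset Polynomial

lemma kernel_decay (s N : ℕ) (hs : 6 ≤ s) (hev : Even s) (hN : 2 * s ≤ N) (t : ℝ)
    (hπ : t ≤ π) (hw : 2 * s / 3 ≤ (N + 1) * t) :
    ‖momentSum s N 0 t‖ / gnorm s N ≤
      (s + 1 / 4) * (1.02 * (s - 1).factorial * 2 ^ s / ((N + 1) * t) ^ s) ∧
    ‖momentSum s N 1 t‖ / gnorm s N ≤
      (2 * s + 1 / 2) * (1.02 * (s - 1).factorial * 2 ^ s / ((N + 1) * t) ^ s) ∧
    ‖momentSum s N 2 t‖ / gnorm s N ≤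
      (4 * s + 1) * (1.02 * (s - 1).factorial * 2 ^ s / ((N + 1) * t) ^ s) := by
  have hs' : (6 : ℝ) ≤ s := by exact_mod_cast hs
  have hN1 : (0 : ℝ) < N + 1 := by positivity
  have hw0 : 0 < (N + 1) * t := by linarith
  have h0 : 0 < t := pos_of_mul_pos_right hw0 hN1.le
  have ew : |(N + 1) * t| = (N + 1) * t := abs_of_pos hw0
  have hsw : s / ((N + 1) * t) ≤ 3 / 2 := by rw [div_le_iff₀ hw0]; linarith
  have hsw0 : 0 ≤ s / ((N + 1) * t) := by positivity
  have key : ∀ c : ℝ, c * (1.02 * (s - 1).factorial * 2 ^ s / ((N + 1) * t) ^ s) =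
      1.02 * c * ((s - 1).factorial * 2 ^ s / ((N + 1) * t) ^ s) := fun c => by ring
  simp only [key]
  refine ⟨?_, ?_, ?_⟩
  · refine norm_momentSum_div_le s N 0 hs hev hN t h0 hπ 1 1 _ zero_le_one
      (splineFT_bound_zero s N hs hev hN) ?_ ?_
    · have := norm_splineFT_zero_le s (by omega) hev _ hw0.ne'
      rwa [ew] at this
    · nlinarith
  · refine norm_momentSum_div_le s N 1 hs hev hN t h0 hπ 1.17 (1 + s / ((N + 1) * t)) _
      (by norm_num) (splineFT_bound_one s N hs hev hN) ?_ ?_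
    · have := norm_splineFT_one_le s (by omega) hev _ hw0.ne'
      rwa [ew] at this
    · nlinarith
  · refine norm_momentSum_div_le s N 2 hs hev hN t h0 hπ 1.37
      (1 + 2 * s / ((N + 1) * t) + s * (s + 1) / ((N + 1) * t) ^ 2) _
      (by norm_num) (splineFT_bound_two s N hs hev hN) ?_ ?_
    · have := norm_splineFT_two_le s (by omega) hev _ hw0.ne'
      rwa [ew] at this
    · rw [show (s * (s + 1) / ((N + 1) * t) ^ 2 : ℝ) =
        (s / ((N + 1) * t)) ^ 2 * (1 + 1 / s) by field_simp, mul_div_assoc]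
      have h1 : (1 : ℝ) / s ≤ 1 / 6 := by gcongr
      have h2 : (0 : ℝ) ≤ 1 / s := by positivity
      have h3 : (s / ((N + 1) * t)) ^ 2 ≤ (9 / 4 : ℝ) := by nlinarith
      have h4 : (s / ((N + 1) * t)) ^ 2 * (1 + 1 / s) ≤ (9 / 4 * (1 + 1 / 6) : ℝ) := by
        gcongr
      nlinarith

/-- The polynomial in `cos t` representing the trigonometric kernel. -/
noncomputable def kernelPoly (s N : ℕ) : ℝ[X] :=
  ∑ k ∈ Icc (-(N : ℤ)) N, C (altSpline s (s - 1) (k / (N + 1)) / gnorm s N) *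
    Chebyshev.T ℝ k

lemma kernelPoly_eval_cos (s N : ℕ) (t : ℝ) : (kernelPoly s N).eval (Real.cos t) =
    ∑ k ∈ Icc (-(N : ℤ)) N, altSpline s (s - 1) (k / (N + 1)) / gnorm s N * Real.cos (k * t) := by
  simp only [kernelPoly, eval_finsetSum, eval_mul, eval_C, Chebyshev.T_real_cos]

lemma exp_int_mul_I (k : ℤ) (t : ℝ) : Complex.exp (k * t * Complex.I) =
    Real.cos (k * t) + Real.sin (k * t) * Complex.I := by
  rw [show ((k : ℂ) * t) = ((k * t : ℝ) : ℂ) by push_cast; rfl, Complex.exp_mul_I,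
    Complex.ofReal_cos, Complex.ofReal_sin]

lemma momentSum_re (s N l : ℕ) (t : ℝ) : (momentSum s N l t).re =
    ∑ k ∈ Icc (-(N : ℤ)) N, ((k : ℝ) / (N + 1)) ^ l * altSpline s (s - 1) (k / (N + 1)) *
      Real.cos (k * t) := by
  rw [momentSum, Complex.re_sum]
  refine sum_congr rfl fun k _ => ?_
  rw [Complex.re_ofReal_mul, exp_int_mul_I]
  simp only [Complex.add_re, Complex.ofReal_re, Complex.re_ofReal_mul, Complex.I_re, mul_zero,
    add_zero]

lemma momentSum_im (s N l : ℕ) (t : ℝ) : (momentSum s N l t).im =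
    ∑ k ∈ Icc (-(N : ℤ)) N, ((k : ℝ) / (N + 1)) ^ l * altSpline s (s - 1) (k / (N + 1)) *
      Real.sin (k * t) := by
  rw [momentSum, Complex.im_sum]
  refine sum_congr rfl fun k _ => ?_
  rw [Complex.im_ofReal_mul, exp_int_mul_I]
  simp only [Complex.add_im, Complex.ofReal_im, Complex.im_ofReal_mul, Complex.I_im, mul_one,
    zero_add]

lemma kernelPoly_eval_cos_eq_re (s N : ℕ) (t : ℝ) : (kernelPoly s N).eval (Real.cos t) =
    (momentSum s N 0 t).re / gnorm s N := by
  rw [kernelPoly_eval_cos, momentSum_re, sum_div]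
  exact sum_congr rfl fun k _ => by ring

lemma sigmaT_eq_eval (s N : ℕ) (hs : 6 ≤ s) (hev : Even s) (t : ℝ) :
    sigmaT s N t = (kernelPoly s N).eval (Real.cos t) := by
  rw [kernelPoly_eval_cos_eq_re, sigmaT]
  have : ∑ k ∈ Icc (-(N : ℤ)) N, (gtilde s ((k : ℝ) / (2 * ((N : ℝ) + 1))) : ℂ) *
      Complex.exp ((k : ℂ) * t * Complex.I) = momentSum s N 0 t := by
    rw [momentSum]
    refine sum_congr rfl fun k hk => ?_
    rw [gtilde_eq_altSpline s N hs hev k hk, pow_zero, one_mul]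
  rw [this, ← Complex.ofReal_one, ← Complex.ofReal_div, Complex.re_ofReal_mul]
  ring

lemma derivative_kernelPoly_eval_cos (s N : ℕ) (t : ℝ) :
    (derivative (kernelPoly s N)).eval (Real.cos t) * Real.sin t =
      (N + 1) * ((momentSum s N 1 t).im / gnorm s N) := by
  have h1 : HasDerivAt (fun t => (kernelPoly s N).eval (Real.cos t))
      ((derivative (kernelPoly s N)).eval (Real.cos t) * -Real.sin t) t :=
    ((kernelPoly s N).hasDerivAt (Real.cos t)).comp t (Real.hasDerivAt_cos t)
  have h2 : HasDerivAt (fun t => (kernelPoly s N).eval (Real.cos t))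
      (∑ k ∈ Icc (-(N : ℤ)) N, altSpline s (s - 1) (k / (N + 1)) / gnorm s N *
        (-Real.sin (k * t) * (k * 1))) t := by
    simp_rw [kernelPoly_eval_cos]
    exact HasDerivAt.fun_sum fun k _ =>
      (((hasDerivAt_id t).const_mul (k : ℝ)).cos).const_mul _
  have h3 := h1.unique h2
  have h4 : (derivative (kernelPoly s N)).eval (Real.cos t) * Real.sin t =
    -((derivative (kernelPoly s N)).eval (Real.cos t) * -Real.sin t) := by ring
  rw [h4, h3, momentSum_im, sum_div, mul_sum, ← sum_neg_distrib]
  refine sum_congr rfl fun k _ => ?_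
  have : (N : ℝ) + 1 ≠ 0 := by positivity
  field_simp

lemma derivative2_kernelPoly_eval_cos (s N : ℕ) (t : ℝ) :
    (derivative (kernelPoly s N)).eval (Real.cos t) * Real.cos t -
      (derivative (derivative (kernelPoly s N))).eval (Real.cos t) * Real.sin t ^ 2 =
      (N + 1) ^ 2 * ((momentSum s N 2 t).re / gnorm s N) := by
  have h1 : HasDerivAt
      (fun t => (derivative (kernelPoly s N)).eval (Real.cos t) * Real.sin t)
      ((derivative (derivative (kernelPoly s N))).eval (Real.cos t) * -Real.sin t * Real.sin t +
        (derivative (kernelPoly s N)).eval (Real.cos t) * Real.cos t) t :=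
    (((derivative (kernelPoly s N)).hasDerivAt (Real.cos t)).comp t (Real.hasDerivAt_cos t)).mul
      (Real.hasDerivAt_sin t)
  have h2 : HasDerivAt
      (fun t => (derivative (kernelPoly s N)).eval (Real.cos t) * Real.sin t)
      ((N + 1) * ((∑ k ∈ Icc (-(N : ℤ)) N, ((k : ℝ) / (N + 1)) ^ 1 *
        altSpline s (s - 1) (k / (N + 1)) * (Real.cos (k * t) * (k * 1))) / gnorm s N)) t := by
    simp_rw [derivative_kernelPoly_eval_cos, momentSum_im]
    refine HasDerivAt.const_mul _ (HasDerivAt.div_const (HasDerivAt.fun_sum fun k _ => ?_) _)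
    exact (((hasDerivAt_id t).const_mul (k : ℝ)).sin).const_mul _
  have h3 := h1.unique h2
  have h4 : (derivative (kernelPoly s N)).eval (Real.cos t) * Real.cos t -
      (derivative (derivative (kernelPoly s N))).eval (Real.cos t) * Real.sin t ^ 2 =
      (derivative (derivative (kernelPoly s N))).eval (Real.cos t) * -Real.sin t * Real.sin t +
        (derivative (kernelPoly s N)).eval (Real.cos t) * Real.cos t := by ring
  rw [h4, h3, momentSum_re, sum_div, sum_div, mul_sum, mul_sum]
  refine sum_congr rfl fun k _ => ?_
  have : (N : ℝ) + 1 ≠ 0 := by positivity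
  field_simp

lemma kernelPoly_eval_one (s N : ℕ) (hs : 6 ≤ s) (hev : Even s) (hN : 2 * s ≤ N) :
    (kernelPoly s N).eval 1 = 1 := by
  rw [← Real.cos_zero, kernelPoly_eval_cos_eq_re, ← gnorm_eq_re s N hs hev, Real.cos_zero,
    div_self (gnorm_pos s N hs hev hN).ne']

lemma derivative_kernelPoly_eval_one_ge (s N : ℕ) (hs : 6 ≤ s) (hev : Even s) (hN : 2 * s ≤ N) :
    0.999 / (2 * ((s : ℝ) + 1)) * (N + 1) ^ 2 ≤ (derivative (kernelPoly s N)).eval 1 := by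
  have h := derivative2_kernelPoly_eval_cos s N 0
  rw [Real.sin_zero, Real.cos_zero, zero_pow two_ne_zero, mul_zero, sub_zero, mul_one] at h
  rw [h, mul_comm]
  exact mul_le_mul_of_nonneg_left (second_moment_ge s N hs hev hN) (by positivity)

/-- The decay profile common to the kernel and its derivatives. -/
noncomputable def decay (s N : ℕ) (t : ℝ) : ℝ :=
  1.02 * (s - 1).factorial * 2 ^ s / ((N + 1) * t) ^ s

lemma kernelPoly_bounds (s N : ℕ) (hs : 6 ≤ s) (hev : Even s) (hN : 2 * s ≤ N) (t : ℝ)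
    (hπ : t ≤ π) (hw : 2 * s / 3 ≤ (N + 1) * t) :
    |(kernelPoly s N).eval (Real.cos t)| ≤ (s + 1 / 4) * decay s N t ∧
    |(derivative (kernelPoly s N)).eval (Real.cos t) * Real.sin t| ≤
      (N + 1) * ((2 * s + 1 / 2) * decay s N t) ∧
    |(derivative (kernelPoly s N)).eval (Real.cos t) * Real.cos t -
      (derivative (derivative (kernelPoly s N))).eval (Real.cos t) * Real.sin t ^ 2| ≤
      (N + 1) ^ 2 * ((4 * s + 1) * decay s N t) := by
  obtain ⟨h0, h1, h2⟩ := kernel_decay s N hs hev hN t hπ hw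
  have hg := gnorm_pos s N hs hev hN
  have hN1 : (0 : ℝ) < N + 1 := by positivity
  rw [derivative2_kernelPoly_eval_cos, derivative_kernelPoly_eval_cos, kernelPoly_eval_cos_eq_re,
    abs_mul, abs_mul, abs_div, abs_div, abs_div, abs_of_pos hg, abs_of_pos hN1,
    abs_of_pos (pow_pos hN1 2)]
  refine ⟨le_trans ?_ h0, mul_le_mul_of_nonneg_left (le_trans ?_ h1) hN1.le,
    mul_le_mul_of_nonneg_left (le_trans ?_ h2) (by positivity)⟩
  · gcongr; exact Complex.abs_re_le_norm _
  · gcongr; exact Complex.abs_im_le_norm _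
  · gcongr; exact Complex.abs_re_le_norm _

end

section

open Finset

/-- The rotation matrix of the quaternion `q 0 + q 1 i + q 2 j + q 3 k`. -/
def quatMat (q : Fin 4 → ℝ) : Mat3 :=
  !![q 0 ^ 2 + q 1 ^ 2 - q 2 ^ 2 - q 3 ^ 2, 2 * (q 1 * q 2 - q 0 * q 3),
      2 * (q 1 * q 3 + q 0 * q 2);
    2 * (q 1 * q 2 + q 0 * q 3), q 0 ^ 2 - q 1 ^ 2 + q 2 ^ 2 - q 3 ^ 2,
      2 * (q 2 * q 3 - q 0 * q 1);
    2 * (q 1 * q 3 - q 0 * q 2), 2 * (q 2 * q 3 + q 0 * q 1),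
      q 0 ^ 2 - q 1 ^ 2 - q 2 ^ 2 + q 3 ^ 2]

lemma exists_rankOne (Q : Fin 4 → Fin 4 → ℝ) (k : Fin 4) (hk : 0 < Q k k)
    (h : ∀ i j, Q i k * Q j k = Q i j * Q k k) : ∃ q : Fin 4 → ℝ, ∀ i j, 4 * (q i * q j) = Q i j := by
  refine ⟨fun i => Q i k / (2 * √(Q k k)), fun i j => ?_⟩
  have h1 : √(Q k k) ≠ 0 := (Real.sqrt_pos.2 hk).ne'
  have h2 := Real.sq_sqrt hk.le
  have : 4 * (Q i k / (2 * √(Q k k)) * (Q j k / (2 * √(Q k k)))) =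
      Q i k * Q j k / √(Q k k) ^ 2 := by ring
  rw [this, h2, h]
  field_simp

/-- The cofactor relations of a rotation matrix, entrywise. -/
lemma IsSO3.adjugate_eq {z : Mat3} (hz : IsSO3 z) : z.adjugate = z.transpose := by
  have h1 : z * z.adjugate = 1 := by rw [Matrix.mul_adjugate, hz.2, one_smul]
  calc z.adjugate = z.transpose * z * z.adjugate := by rw [hz.1, one_mul]
    _ = _ := by rw [mul_assoc, h1, mul_one]

lemma IsSO3.mul_transpose {z : Mat3} (hz : IsSO3 z) : z * z.transpose = 1 :=
  mul_eq_one_comm.1 hz.1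

lemma IsSO3.inv_eq {z : Mat3} (hz : IsSO3 z) : z⁻¹ = z.transpose :=
  Matrix.inv_eq_left_inv hz.1

lemma IsSO3.transpose {z : Mat3} (hz : IsSO3 z) : IsSO3 z.transpose :=
  ⟨by rw [Matrix.transpose_transpose, hz.mul_transpose], by rw [Matrix.det_transpose, hz.2]⟩

lemma IsSO3.mul {z w : Mat3} (hz : IsSO3 z) (hw : IsSO3 w) : IsSO3 (z * w) :=
  ⟨by rw [Matrix.transpose_mul, mul_assoc, ← mul_assoc z.transpose, hz.1, one_mul, hw.1],
    by rw [Matrix.det_mul, hz.2, hw.2, mul_one]⟩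

set_option maxHeartbeats 4000000 in
lemma IsSO3.exists_quatMat {z : Mat3} (hz : IsSO3 z) :
    ∃ q : Fin 4 → ℝ, 0 ≤ q 0 ∧ q 0 ^ 2 + q 1 ^ 2 + q 2 ^ 2 + q 3 ^ 2 = 1 ∧ z = quatMat q := by
  have ho := hz.1
  have ho' := hz.mul_transpose
  have ha := hz.adjugate_eq
  rw [Matrix.adjugate_fin_three] at ha
  have O : ∀ i j, (z.transpose * z) i j = (1 : Mat3) i j := fun i j => by rw [ho]
  have O' : ∀ i j, (z * z.transpose) i j = (1 : Mat3) i j := fun i j => by rw [ho']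
  have A : ∀ i j, _ = z.transpose i j := fun i j => congrFun (congrFun ha i) j
  simp only [Matrix.mul_apply, Matrix.transpose_apply, Fin.sum_univ_three, Fin.forall_fin_succ,
    Fin.isValue, Fin.succ_zero_eq_one, Fin.succ_one_eq_two, IsEmpty.forall_iff, and_true,
    Matrix.of_apply, Matrix.cons_val, Matrix.one_apply] at O O' A
  norm_num [show ¬((0 : Fin 3) = 2) by decide, show ¬((1 : Fin 3) = 2) by decide,
    show ¬((2 : Fin 3) = 0) by decide, show ¬((2 : Fin 3) = 1) by decide] at O O' A
  obtain ⟨⟨o00, o01, o02⟩, ⟨o10, o11, o12⟩, o20, o21, o22⟩ := O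
  obtain ⟨⟨p00, p01, p02⟩, ⟨p10, p11, p12⟩, p20, p21, p22⟩ := O'
  obtain ⟨⟨a00, a01, a02⟩, ⟨a10, a11, a12⟩, a20, a21, a22⟩ := A
  set Q : Fin 4 → Fin 4 → ℝ :=
    ![![1 + z 0 0 + z 1 1 + z 2 2, z 2 1 - z 1 2, z 0 2 - z 2 0, z 1 0 - z 0 1],
      ![z 2 1 - z 1 2, 1 + z 0 0 - z 1 1 - z 2 2, z 0 1 + z 1 0, z 0 2 + z 2 0],
      ![z 0 2 - z 2 0, z 0 1 + z 1 0, 1 - z 0 0 + z 1 1 - z 2 2, z 1 2 + z 2 1],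
      ![z 1 0 - z 0 1, z 0 2 + z 2 0, z 1 2 + z 2 1, 1 - z 0 0 - z 1 1 + z 2 2]] with hQ
  have hk : ∃ k, 0 < Q k k := by
    by_contra! hc
    have h0 := hc 0
    have h1 := hc 1
    have h2 := hc 2
    have h3 := hc 3
    simp [hQ] at h0 h1 h2 h3
    linarith
  obtain ⟨k, hk⟩ := hk
  have hr : ∀ k i j, Q i k * Q j k = Q i j * Q k k := by
    intro k i j
    fin_cases k <;> fin_cases i <;> fin_cases j <;> simp [hQ] <;> linarith
  obtain ⟨q, hq⟩ := exists_rankOne Q k hk (hr k)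
  have main : ∀ q : Fin 4 → ℝ, (∀ i j, 4 * (q i * q j) = Q i j) →
      q 0 ^ 2 + q 1 ^ 2 + q 2 ^ 2 + q 3 ^ 2 = 1 ∧ z = quatMat q := by
    intro q hq
    simp only [Fin.forall_fin_succ, hQ] at hq
    simp at hq
    obtain ⟨⟨q00, q01, q02, q03⟩, ⟨-, q11, q12, q13⟩, ⟨-, -, q22, q23⟩, -, -, -, q33⟩ := hq
    refine ⟨by linarith, ?_⟩
    ext i j
    fin_cases i <;> fin_cases j <;> simp [quatMat] <;> linarith
  rcases le_total 0 (q 0) with h | h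
  · exact ⟨q, h, main q hq⟩
  · refine ⟨fun i => -q i, by simpa using h, main (fun i => -q i) fun i j => ?_⟩
    rw [neg_mul_neg, hq]

/-- Quaternions of norm one. -/
def IsUnitQuat (q : Fin 4 → ℝ) : Prop := q 0 ^ 2 + q 1 ^ 2 + q 2 ^ 2 + q 3 ^ 2 = 1

lemma trace_quatMat (q : Fin 4 → ℝ) (hq : IsUnitQuat q) :
    (Matrix.trace (quatMat q) - 1) / 2 = 2 * q 0 ^ 2 - 1 := by
  unfold IsUnitQuat at hq
  simp [Matrix.trace_fin_three, quatMat]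
  linarith

lemma IsUnitQuat.sq_le_one {q : Fin 4 → ℝ} (hq : IsUnitQuat q) : q 0 ^ 2 ≤ 1 := by
  unfold IsUnitQuat at hq
  nlinarith [sq_nonneg (q 1), sq_nonneg (q 2), sq_nonneg (q 3)]

lemma arccos_two_mul_sq_sub_one {a : ℝ} (h0 : 0 ≤ a) (h1 : a ≤ 1) :
    Real.arccos (2 * a ^ 2 - 1) = 2 * Real.arccos a := by
  have h2 : Real.arccos a ≤ π / 2 := Real.arccos_le_pi_div_two.2 h0
  rw [← Real.arccos_cos (x := 2 * Real.arccos a) (by linarith [Real.arccos_nonneg a])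
    (by linarith), Real.cos_two_mul, Real.cos_arccos (by linarith) h1]

lemma rotAngle_quatMat (q : Fin 4 → ℝ) (hq : IsUnitQuat q) (h0 : 0 ≤ q 0) :
    rotAngle (quatMat q) = 2 * Real.arccos (q 0) := by
  rw [rotAngle, trace_quatMat q hq, arccos_two_mul_sq_sub_one h0]
  nlinarith [hq.sq_le_one]

lemma IsSO3.cos_rotAngle {z : Mat3} (hz : IsSO3 z) :
    Real.cos (rotAngle z) = (Matrix.trace z - 1) / 2 := by
  obtain ⟨q, h0, hq, rfl⟩ := hz.exists_quatMat
  have h1 := IsUnitQuat.sq_le_one hq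
  rw [rotAngle, trace_quatMat q hq, Real.cos_arccos (by nlinarith) (by nlinarith)]

lemma trace_quatMat_mul_transpose (p q : Fin 4 → ℝ) (hp : IsUnitQuat p) (hq : IsUnitQuat q) :
    (Matrix.trace (quatMat p * (quatMat q).transpose) - 1) / 2 =
      2 * (p 0 * q 0 + p 1 * q 1 + p 2 * q 2 + p 3 * q 3) ^ 2 - 1 := by
  have e : Matrix.trace (quatMat p * (quatMat q).transpose) =
      4 * (p 0 * q 0 + p 1 * q 1 + p 2 * q 2 + p 3 * q 3) ^ 2 -
      (p 0 ^ 2 + p 1 ^ 2 + p 2 ^ 2 + p 3 ^ 2) * (q 0 ^ 2 + q 1 ^ 2 + q 2 ^ 2 + q 3 ^ 2) := by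
    simp only [Matrix.trace_fin_three, Matrix.mul_apply, Matrix.transpose_apply,
      Fin.sum_univ_three]
    simp [quatMat]
    ring
  rw [e, hp, hq]
  ring

/-- The derivative of `x ↦ cos √x` is monotone. -/
lemma monotoneOn_neg_sin_sqrt_div :
    MonotoneOn (fun x : ℝ => -Real.sin (√x) * (1 / (2 * √x))) (Set.Ioo 0 (π ^ 2)) := by
  intro x hx y hy hxy
  have hx' : 0 < √x := Real.sqrt_pos.2 hx.1
  have hy' : √y ≤ π := Real.sqrt_le_iff.2 ⟨Real.pi_pos.le, hy.2.le⟩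
  have hxy' : √x ≤ √y := Real.sqrt_le_sqrt hxy
  rcases hxy'.eq_or_lt with h | h
  · simp only [h, le_refl]
  have hc := strictConcaveOn_sin_Icc.concaveOn
  have := hc.slope_anti_adjacent (x := 0) (y := √x) (z := √y) ⟨le_rfl, Real.pi_pos.le⟩
    ⟨by linarith, hy'⟩ hx' h
  rw [Real.sin_zero, sub_zero, sub_zero, div_le_div_iff₀ (by linarith) hx'] at this
  have hfin : Real.sin (√y) / √y ≤ Real.sin (√x) / √x := by
    rw [div_le_div_iff₀ (by linarith) hx']; nlinarith
  have e : ∀ u : ℝ, -Real.sin u * (1 / (2 * u)) = -(Real.sin u / u) / 2 := fun u => by ring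
  simp only [e]
  linarith

lemma convexOn_cos_sqrt : ConvexOn ℝ (Set.Icc 0 (π ^ 2)) fun x : ℝ => Real.cos (√x) := by
  have hd : ∀ x ∈ Set.Ioo (0 : ℝ) (π ^ 2),
      HasDerivAt (fun x : ℝ => Real.cos (√x)) (-Real.sin (√x) * (1 / (2 * √x))) x :=
    fun x hx => (Real.hasDerivAt_sqrt hx.1.ne').cos
  refine MonotoneOn.convexOn_of_deriv (convex_Icc _ _) (by fun_prop) ?_ ?_
  · rw [interior_Icc]
    exact fun x hx => (hd x hx).differentiableAt.differentiableWithinAt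
  · rw [interior_Icc]
    exact monotoneOn_neg_sin_sqrt_div.congr fun x hx => (hd x hx).deriv.symm

/-- Spherical chords are dominated by the chords of the logarithmic chart. -/
lemma cos_sqrt_le (A B c : ℝ) (hA : 0 ≤ A) (hA' : A ≤ π / 2) (hB : 0 ≤ B) (hB' : B ≤ π / 2)
    (hc : -1 ≤ c) (hc' : c ≤ 1) :
    Real.cos (√(A ^ 2 + B ^ 2 - 2 * A * B * c)) ≤
      Real.cos A * Real.cos B + Real.sin A * Real.sin B * c := by
  have hab : 0 ≤ A * B := mul_nonneg hA hB
  have m1 : (A - B) ^ 2 ∈ Set.Icc 0 (π ^ 2) := ⟨sq_nonneg _, by nlinarith⟩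
  have m2 : (A + B) ^ 2 ∈ Set.Icc 0 (π ^ 2) := ⟨sq_nonneg _, by nlinarith⟩
  have h := convexOn_cos_sqrt.2 m1 m2 (show 0 ≤ (1 + c) / 2 by linarith)
    (show 0 ≤ (1 - c) / 2 by linarith) (by ring)
  simp only [smul_eq_mul] at h
  rw [Real.sqrt_sq_eq_abs, Real.sqrt_sq_eq_abs, Real.cos_abs, Real.cos_abs, Real.cos_sub,
    Real.cos_add] at h
  have e : A ^ 2 + B ^ 2 - 2 * A * B * c =
      (1 + c) / 2 * (A - B) ^ 2 + (1 - c) / 2 * (A + B) ^ 2 := by ring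
  rw [e]
  linarith

/-- The logarithm of the rotation attached to a unit quaternion. -/
noncomputable def quatLog (q : Fin 4 → ℝ) : EuclideanSpace ℝ (Fin 3) :=
  WithLp.toLp 2 fun i => 2 * Real.arccos (q 0) / Real.sin (Real.arccos (q 0)) * q i.succ

lemma IsUnitQuat.sin_arccos_sq {q : Fin 4 → ℝ} (hq : IsUnitQuat q) :
    Real.sin (Real.arccos (q 0)) ^ 2 = q 1 ^ 2 + q 2 ^ 2 + q 3 ^ 2 := by
  rw [Real.sin_arccos, Real.sq_sqrt (by linarith [hq.sq_le_one])]
  unfold IsUnitQuat at hq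
  linarith

lemma sin_arccos_pos {a : ℝ} (h0 : 0 ≤ a) (h : 0 < Real.arccos a) :
    0 < Real.sin (Real.arccos a) :=
  Real.sin_pos_of_pos_of_lt_pi h
    (by linarith [Real.arccos_le_pi_div_two.2 h0, Real.pi_pos])

lemma norm_quatLog (q : Fin 4 → ℝ) (hq : IsUnitQuat q) (h0 : 0 ≤ q 0) :
    ‖quatLog q‖ = 2 * Real.arccos (q 0) := by
  have hA := Real.arccos_nonneg (q 0)
  have h : ‖quatLog q‖ ^ 2 = (2 * Real.arccos (q 0)) ^ 2 := by
    rw [EuclideanSpace.norm_sq_eq, Fin.sum_univ_three]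
    simp only [quatLog, Real.norm_eq_abs, sq_abs, mul_pow, ← mul_add]
    rw [show q (Fin.succ 0) ^ 2 + q (Fin.succ 1) ^ 2 + q (Fin.succ 2) ^ 2 =
      q 1 ^ 2 + q 2 ^ 2 + q 3 ^ 2 from rfl, ← hq.sin_arccos_sq]
    rcases hA.eq_or_lt with h | h
    · rw [← h]; simp
    · have := sin_arccos_pos h0 h
      field_simp
  exact (sq_eq_sq₀ (norm_nonneg _) (by positivity)).1 h

lemma norm_quatLog_sub_sq (p q : Fin 4 → ℝ) (hp : IsUnitQuat p) (hq : IsUnitQuat q)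
    (hp0 : 0 ≤ p 0) (hq0 : 0 ≤ q 0) (hp1 : 0 < Real.arccos (p 0)) (hq1 : 0 < Real.arccos (q 0)) :
    (‖quatLog p - quatLog q‖ / 2) ^ 2 = Real.arccos (p 0) ^ 2 + Real.arccos (q 0) ^ 2 -
      2 * Real.arccos (p 0) * Real.arccos (q 0) * ((p 1 * q 1 + p 2 * q 2 + p 3 * q 3) /
        (Real.sin (Real.arccos (p 0)) * Real.sin (Real.arccos (q 0)))) := by
  have sp := sin_arccos_pos hp0 hp1
  have sq := sin_arccos_pos hq0 hq1
  have ep := hp.sin_arccos_sq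
  have eq := hq.sin_arccos_sq
  rw [div_pow, EuclideanSpace.norm_sq_eq, Fin.sum_univ_three]
  simp only [quatLog, Real.norm_eq_abs, sq_abs, PiLp.sub_apply]
  rw [show Fin.succ (0 : Fin 3) = 1 from rfl, show Fin.succ (1 : Fin 3) = 2 from rfl,
    show Fin.succ (2 : Fin 3) = 3 from rfl]
  generalize Real.sin (Real.arccos (p 0)) = a at *
  generalize Real.sin (Real.arccos (q 0)) = b at *
  generalize Real.arccos (p 0) = A at *
  generalize Real.arccos (q 0) = B at *
  calc _ = A ^ 2 / a ^ 2 * (p 1 ^ 2 + p 2 ^ 2 + p 3 ^ 2) +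
        B ^ 2 / b ^ 2 * (q 1 ^ 2 + q 2 ^ 2 + q 3 ^ 2) -
        2 * A * B * ((p 1 * q 1 + p 2 * q 2 + p 3 * q 3) / (a * b)) := by
        field_simp; ring
    _ = _ := by rw [← ep, ← eq]; field_simp

lemma rotAngle_le_norm_quatLog_sub (p q : Fin 4 → ℝ) (hp : IsUnitQuat p) (hq : IsUnitQuat q)
    (hp0 : 0 ≤ p 0) (hq0 : 0 ≤ q 0) (hp1 : 0 < Real.arccos (p 0)) (hq1 : 0 < Real.arccos (q 0)) :
    rotAngle (quatMat p * (quatMat q).transpose) ≤ ‖quatLog p - quatLog q‖ := by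
  have hd := norm_quatLog_sub_sq p q hp hq hp0 hq0 hp1 hq1
  set d := ‖quatLog p - quatLog q‖ / 2 with hd'
  have hd0 : 0 ≤ d := by positivity
  rw [show ‖quatLog p - quatLog q‖ = 2 * d by rw [hd']; ring]
  have sp := sin_arccos_pos hp0 hp1
  have sq := sin_arccos_pos hq0 hq1
  have ep := hp.sin_arccos_sq
  have eq := hq.sin_arccos_sq
  have hcs : (p 1 * q 1 + p 2 * q 2 + p 3 * q 3) ^ 2 ≤
      (Real.sin (Real.arccos (p 0)) * Real.sin (Real.arccos (q 0))) ^ 2 := by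
    rw [mul_pow, ep, eq]
    nlinarith [sq_nonneg (p 1 * q 2 - p 2 * q 1), sq_nonneg (p 1 * q 3 - p 3 * q 1),
      sq_nonneg (p 2 * q 3 - p 3 * q 2)]
  have hcs' := abs_le_of_sq_le_sq' hcs (by positivity)
  have hsp : 0 < Real.sin (Real.arccos (p 0)) * Real.sin (Real.arccos (q 0)) := by positivity
  have hmain := cos_sqrt_le (Real.arccos (p 0)) (Real.arccos (q 0))
    ((p 1 * q 1 + p 2 * q 2 + p 3 * q 3) /
        (Real.sin (Real.arccos (p 0)) * Real.sin (Real.arccos (q 0))))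
    hp1.le (Real.arccos_le_pi_div_two.2 hp0) hq1.le (Real.arccos_le_pi_div_two.2 hq0)
    (by rw [le_div_iff₀ hsp]; linarith [hcs'.1]) (by rw [div_le_iff₀ hsp]; linarith [hcs'.2])
  rw [← hd, Real.sqrt_sq hd0, mul_div_cancel₀ _ hsp.ne',
    Real.cos_arccos (by linarith) (by nlinarith [hp.sq_le_one]),
    Real.cos_arccos (by linarith) (by nlinarith [hq.sq_le_one])] at hmain
  rw [rotAngle, trace_quatMat_mul_transpose p q hp hq]
  set r := p 0 * q 0 + p 1 * q 1 + p 2 * q 2 + p 3 * q 3 with hr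
  have hr1 : r ^ 2 ≤ 1 := by
    have e : r ^ 2 ≤ (p 0 ^ 2 + p 1 ^ 2 + p 2 ^ 2 + p 3 ^ 2) *
        (q 0 ^ 2 + q 1 ^ 2 + q 2 ^ 2 + q 3 ^ 2) := by
      rw [hr]
      nlinarith [sq_nonneg (p 1 * q 2 - p 2 * q 1), sq_nonneg (p 1 * q 3 - p 3 * q 1),
        sq_nonneg (p 2 * q 3 - p 3 * q 2), sq_nonneg (p 0 * q 1 - p 1 * q 0),
        sq_nonneg (p 0 * q 2 - p 2 * q 0), sq_nonneg (p 0 * q 3 - p 3 * q 0)]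
    rw [hp, hq] at e
    linarith
  rcases le_total (π / 2) d with h | h
  · linarith [Real.arccos_le_pi (2 * r ^ 2 - 1)]
  · rw [← sq_abs, arccos_two_mul_sq_sub_one (abs_nonneg r) (by rwa [← sq_le_one_iff_abs_le_one])]
    have : Real.arccos |r| ≤ Real.arccos (Real.cos d) :=
      Real.arccos_le_arccos (le_trans (by linarith) (le_abs_self r))
    rw [Real.arccos_cos hd0 (by linarith [Real.pi_pos])] at this
    linarith

/-- A logarithmic chart on SO(3): radial isometry, and no distance decreases. -/
lemma exists_log_chart : ∃ u : Mat3 → EuclideanSpace ℝ (Fin 3),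
    (∀ z, IsSO3 z → ‖u z‖ = rotAngle z) ∧
    ∀ z w, IsSO3 z → IsSO3 w → 0 < rotAngle z → 0 < rotAngle w →
      rotAngle (z * w.transpose) ≤ ‖u z - u w‖ := by
  choose! q hq0 hq hz using fun (z : Mat3) (hz : IsSO3 z) => hz.exists_quatMat
  have hang : ∀ z, IsSO3 z → rotAngle z = 2 * Real.arccos (q z 0) := fun z h => by
    rw [← rotAngle_quatMat (q z) (hq z h) (hq0 z h), ← hz z h]
  refine ⟨fun z => quatLog (q z), fun z h => ?_, fun z w h h' p p' => ?_⟩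
  · rw [norm_quatLog _ (hq z h) (hq0 z h), hang z h]
  · rw [hang z h] at p
    rw [hang w h'] at p'
    have := rotAngle_le_norm_quatLog_sub (q z) (q w) (hq z h) (hq w h') (hq0 z h) (hq0 w h')
      (by linarith) (by linarith)
    rwa [← hz z h, ← hz w h'] at this

end

section

open Finset MeasureTheory

lemma volume_real_ball (x : EuclideanSpace ℝ (Fin 3)) {r : ℝ} (hr : 0 ≤ r) :
    volume.real (Metric.ball x r) =
      r ^ 3 * volume.real (Metric.ball (0 : EuclideanSpace ℝ (Fin 3)) 1) := by
  rw [measureReal_def, Measure.addHaar_ball _ x hr, ENNReal.toReal_mul,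
    ENNReal.toReal_ofReal (by positivity), finrank_euclideanSpace_fin, measureReal_def]

/-- Volume bound for the number of separated points in a spherical shell. -/
lemma card_shell_le {ι : Type*} (S : Finset ι) (u : ι → EuclideanSpace ℝ (Fin 3)) {δ : ℝ}
    (hδ : 0 < δ) {m : ℕ} (hm : 1 ≤ m) (h1 : ∀ i ∈ S, m * δ ≤ ‖u i‖)
    (h2 : ∀ i ∈ S, ‖u i‖ < (m + 1) * δ)
    (h3 : ∀ i ∈ S, ∀ j ∈ S, i ≠ j → δ ≤ ‖u i - u j‖) : (S.card : ℝ) ≤ 124 * m ^ 2 := by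
  have hm' : (1 : ℝ) ≤ m := by exact_mod_cast hm
  set V := volume.real (Metric.ball (0 : EuclideanSpace ℝ (Fin 3)) 1) with hV
  have hV0 : 0 < V :=
    ENNReal.toReal_pos (Metric.measure_ball_pos _ _ one_pos).ne' measure_ball_lt_top.ne
  have hU : volume.real (⋃ i ∈ S, Metric.ball (u i) (δ / 2)) = S.card * ((δ / 2) ^ 3 * V) := by
    rw [measureReal_biUnion_finset]
    · simp_rw [volume_real_ball _ (half_pos hδ).le]
      rw [sum_const, nsmul_eq_mul]
    · intro i hi j hj hij
      refine Metric.ball_disjoint_ball ?_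
      rw [dist_eq_norm]
      linarith [h3 i hi j hj hij]
    · exact fun _ _ => measurableSet_ball
  have hdis : Disjoint (⋃ i ∈ S, Metric.ball (u i) (δ / 2))
      (Metric.ball 0 ((m - 1 / 2) * δ)) := by
    simp only [Set.disjoint_iUnion_left]
    intro i hi
    refine Metric.ball_disjoint_ball ?_
    rw [dist_zero_right]
    linarith [h1 i hi]
  have hsub : (⋃ i ∈ S, Metric.ball (u i) (δ / 2)) ∪ Metric.ball 0 ((m - 1 / 2) * δ) ⊆
      Metric.ball 0 ((m + 3 / 2) * δ) := by
    refine Set.union_subset (Set.iUnion₂_subset fun i hi => ?_) ?_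
    · refine Metric.ball_subset_ball' ?_
      rw [dist_zero_right]
      linarith [h2 i hi]
    · exact Metric.ball_subset_ball (by nlinarith)
  have hfin : volume (⋃ i ∈ S, Metric.ball (u i) (δ / 2)) ≠ ⊤ :=
    ((measure_mono (Set.subset_union_left.trans hsub)).trans_lt measure_ball_lt_top).ne
  have hle := measureReal_mono hsub (μ := volume) measure_ball_lt_top.ne
  rw [measureReal_union hdis measurableSet_ball hfin measure_ball_lt_top.ne, hU,
    volume_real_ball 0 (show 0 ≤ ((m : ℝ) - 1 / 2) * δ by nlinarith),
    volume_real_ball 0 (show 0 ≤ ((m : ℝ) + 3 / 2) * δ by nlinarith), ← hV] at hle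
  have hc : (S.card : ℝ) ≤ (2 * m + 3) ^ 3 - (2 * m - 1) ^ 3 := by
    have hpos : 0 < δ ^ 3 * V / 8 := by positivity
    refine le_of_mul_le_mul_right ?_ hpos
    linarith
  nlinarith

lemma summable_zetaNat (m : ℕ) (hm : 2 ≤ m) : Summable fun n : ℕ => (1 : ℝ) / ((n : ℝ) + 1) ^ m := by
  have h := (summable_nat_add_iff 1).2 (Real.summable_one_div_nat_pow.2 (show 1 < m by omega))
  refine h.congr fun k => by push_cast; rfl

lemma sum_le_of_separated {ι : Type*} (S : Finset ι) (u : ι → EuclideanSpace ℝ (Fin 3)) {δ : ℝ}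
    (hδ : 0 < δ) (h1 : ∀ i ∈ S, δ ≤ ‖u i‖) (h3 : ∀ i ∈ S, ∀ j ∈ S, i ≠ j → δ ≤ ‖u i - u j‖)
    (s : ℕ) (hs : 6 ≤ s) :
    ∑ i ∈ S, 1 / ‖u i‖ ^ s ≤ 124 * zetaNat (s - 2) / δ ^ s := by
  set f : ι → ℕ := fun i => ⌊‖u i‖ / δ⌋₊ - 1 with hf
  have hfloor : ∀ i ∈ S, 1 ≤ ⌊‖u i‖ / δ⌋₊ := fun i hi =>
    Nat.le_floor (by rw [Nat.cast_one, le_div_iff₀ hδ, one_mul]; exact h1 i hi)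
  have hf1 : ∀ i ∈ S, ∀ n, f i = n → ((n : ℝ) + 1) * δ ≤ ‖u i‖ ∧ ‖u i‖ < ((n : ℝ) + 1 + 1) * δ := by
    intro i hi n hn
    have e : ⌊‖u i‖ / δ⌋₊ = n + 1 := by have := hfloor i hi; simp only [hf] at hn; omega
    have a := Nat.floor_le (show 0 ≤ ‖u i‖ / δ by positivity)
    have b := Nat.lt_floor_add_one (‖u i‖ / δ)
    rw [e] at a b
    push_cast at a b
    exact ⟨(le_div_iff₀ hδ).1 a, (div_lt_iff₀ hδ).1 b⟩
  rw [← sum_fiberwise_of_maps_to (g := f) (t := S.image f) fun i hi => mem_image_of_mem f hi]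
  have hfib : ∀ n ∈ S.image f, ∑ i ∈ S with f i = n, 1 / ‖u i‖ ^ s ≤
      124 / δ ^ s * (1 / ((n : ℝ) + 1) ^ (s - 2)) := by
    intro n _
    have hcard := card_shell_le (S.filter fun i => f i = n) u hδ (m := n + 1) (by omega)
      (fun i hi => by
        rw [mem_filter] at hi; push_cast; exact (hf1 i hi.1 n hi.2).1)
      (fun i hi => by
        rw [mem_filter] at hi; push_cast; exact (hf1 i hi.1 n hi.2).2)
      (fun i hi j hj => h3 i (mem_filter.1 hi).1 j (mem_filter.1 hj).1)
    calc ∑ i ∈ S with f i = n, 1 / ‖u i‖ ^ s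
        ≤ ∑ i ∈ S with f i = n, 1 / (((n : ℝ) + 1) * δ) ^ s := by
          refine sum_le_sum fun i hi => ?_
          rw [mem_filter] at hi
          have := (hf1 i hi.1 n hi.2).1
          gcongr
      _ = ((S.filter fun i => f i = n).card : ℝ) * (1 / (((n : ℝ) + 1) * δ) ^ s) := by
          rw [sum_const, nsmul_eq_mul]
      _ ≤ (124 * ((n + 1 : ℕ) : ℝ) ^ 2) * (1 / (((n : ℝ) + 1) * δ) ^ s) := by gcongr
      _ = _ := by
          have e : ((n : ℝ) + 1) ^ s = (n + 1) ^ (s - 2) * (n + 1) ^ 2 := by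
            rw [← pow_add]; congr 1; omega
          push_cast
          rw [mul_pow, e]
          field_simp
  refine (sum_le_sum hfib).trans ?_
  rw [← mul_sum]
  have := (summable_zetaNat (s - 2) (by omega)).sum_le_tsum (S.image f) fun n _ => by positivity
  calc _ ≤ 124 / δ ^ s * zetaNat (s - 2) := by
        refine mul_le_mul_of_nonneg_left this (by positivity)
    _ = _ := by ring

/-- Decay sums over a separated set of rotations. -/
lemma sum_rotAngle_le {ι : Type*} (S : Finset ι) (z : ι → Mat3) (hz : ∀ i ∈ S, IsSO3 (z i))
    {δ : ℝ} (hδ : 0 < δ) (h1 : ∀ i ∈ S, δ ≤ rotAngle (z i))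
    (h3 : ∀ i ∈ S, ∀ j ∈ S, i ≠ j → δ ≤ rotAngle (z i * (z j).transpose))
    (s : ℕ) (hs : 6 ≤ s) :
    ∑ i ∈ S, 1 / rotAngle (z i) ^ s ≤ 124 * zetaNat (s - 2) / δ ^ s := by
  obtain ⟨u, hu, hu'⟩ := exists_log_chart
  have h := sum_le_of_separated S (fun i => u (z i)) hδ
    (fun i hi => by rw [hu _ (hz i hi)]; exact h1 i hi)
    (fun i hi j hj hij => (h3 i hi j hj hij).trans
      (hu' _ _ (hz i hi) (hz j hj) (hδ.trans_le (h1 i hi)) (hδ.trans_le (h1 j hj)))) s hs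
  refine le_trans (le_of_eq (sum_congr rfl fun i hi => ?_)) h
  rw [hu _ (hz i hi)]

end

section

open Finset

section ExpCurve

attribute [local instance] Matrix.linftyOpNormedRing Matrix.linftyOpNormedAlgebra

lemma hasDerivAt_map_exp_smul (φ : Mat3 →ₗ[ℝ] ℝ) (L : Mat3) :
    HasDerivAt (fun t : ℝ => φ (NormedSpace.exp (t • L))) (φ L) 0 := by
  have h := hasDerivAt_exp_smul_const (𝕂 := ℝ) L (0 : ℝ)
  simp only [zero_smul, NormedSpace.exp_zero, one_mul] at h
  exact (LinearMap.toContinuousLinearMap φ).hasFDerivAt.comp_hasDerivAt (0 : ℝ) h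

end ExpCurve

lemma Lgen_transpose (i : Fin 3) : (Lgen i).transpose = -Lgen i := by
  fin_cases i <;> ext a b <;> fin_cases a <;> fin_cases b <;> simp [Lgen]

lemma exp_transpose_mul_exp {L : Mat3} (hL : L.transpose = -L) :
    (NormedSpace.exp L).transpose * NormedSpace.exp L = 1 := by
  have h := Matrix.exp_add_of_commute (-L) L (Commute.neg_left (Commute.refl L))
  rw [neg_add_cancel, NormedSpace.exp_zero] at h
  rw [← Matrix.exp_transpose, hL, ← h]

/-- Exponentials of skew-symmetric matrices lie in SO(3). -/
lemma isSO3_exp_of_skew {L : Mat3} (hL : L.transpose = -L) : IsSO3 (NormedSpace.exp L) := by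
  refine ⟨exp_transpose_mul_exp hL, ?_⟩
  have hH : ((1 / 2 : ℝ) • L).transpose = -((1 / 2 : ℝ) • L) := by
    rw [Matrix.transpose_smul, hL, smul_neg]
  have h2 := Matrix.exp_add_of_commute ((1 / 2 : ℝ) • L) ((1 / 2 : ℝ) • L) (Commute.refl _)
  rw [← add_smul, add_halves, one_smul] at h2
  have h := congrArg Matrix.det (exp_transpose_mul_exp hH)
  rw [Matrix.det_mul, Matrix.det_transpose, Matrix.det_one] at h
  rw [h2, Matrix.det_mul, h]

lemma isSO3_exp (i : Fin 3) (t : ℝ) : IsSO3 (NormedSpace.exp (t • Lgen i)) :=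
  isSO3_exp_of_skew (by rw [Matrix.transpose_smul, Lgen_transpose, smul_neg])

lemma IsSO3.inv_mul {x y : Mat3} (hy : IsSO3 y) (hx : IsSO3 x) : IsSO3 (y⁻¹ * x) := by
  rw [hy.inv_eq]; exact hy.transpose.mul hx

lemma sigmaK_eq {s : ℕ} (N : ℕ) (hs : 6 ≤ s) (hev : Even s) {x y : Mat3} (hx : IsSO3 x)
    (hy : IsSO3 y) :
    sigmaK s N x y = (kernelPoly s N).eval ((Matrix.trace (y.transpose * x) - 1) / 2) := by
  rw [sigmaK, sigmaT_eq_eval s N hs hev, (hy.inv_mul hx).cos_rotAngle, hy.inv_eq]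

/-- Derivative of a class function along a left-invariant curve. -/
lemma hasDerivAt_trace_exp (P : Polynomial ℝ) (z L : Mat3) :
    HasDerivAt (fun t : ℝ => P.eval ((Matrix.trace (z * NormedSpace.exp (t • L)) - 1) / 2))
      ((Polynomial.derivative P).eval ((Matrix.trace z - 1) / 2) * (Matrix.trace (z * L) / 2)) 0 := by
  have h := hasDerivAt_map_exp_smul (Matrix.traceLinearMap (Fin 3) ℝ ℝ ∘ₗ LinearMap.mulLeft ℝ z) L
  simp only [LinearMap.comp_apply, LinearMap.mulLeft_apply, Matrix.traceLinearMap_apply] at h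
  have h' := (h.sub_const 1).div_const 2
  have hP := P.hasDerivAt ((Matrix.trace z - 1) / 2)
  have e : z * NormedSpace.exp ((0 : ℝ) • L) = z := by
    rw [zero_smul, NormedSpace.exp_zero, mul_one]
  exact HasDerivAt.comp (0 : ℝ) (by rw [e]; exact hP) h'

lemma Xx_sigmaK {s : ℕ} (N : ℕ) (hs : 6 ≤ s) (hev : Even s) (j : Fin 3) {x y : Mat3}
    (hx : IsSO3 x) (hy : IsSO3 y) :
    Xx j (sigmaK s N) x y =
      (Polynomial.derivative (kernelPoly s N)).eval ((Matrix.trace (y.transpose * x) - 1) / 2) *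
        (Matrix.trace (y.transpose * x * Lgen j) / 2) := by
  rw [← (hasDerivAt_trace_exp (kernelPoly s N) (y.transpose * x) (Lgen j)).deriv, Xx]
  congr 1
  funext t
  rw [sigmaK_eq N hs hev (hx.mul (isSO3_exp j t)) hy, mul_assoc]

lemma Xy_sigmaK {s : ℕ} (N : ℕ) (hs : 6 ≤ s) (hev : Even s) (i : Fin 3) {x y : Mat3}
    (hx : IsSO3 x) (hy : IsSO3 y) :
    Xy i (sigmaK s N) x y =
      (Polynomial.derivative (kernelPoly s N)).eval ((Matrix.trace (y.transpose * x) - 1) / 2) *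
        (Matrix.trace ((Lgen i).transpose * (y.transpose * x)) / 2) := by
  have e : ∀ E : Mat3, Matrix.trace (E.transpose * (y.transpose * x)) =
      Matrix.trace (x.transpose * y * E) := fun E => by
    rw [← Matrix.trace_transpose]
    simp only [Matrix.transpose_mul, Matrix.transpose_transpose, mul_assoc]
  have e0 : Matrix.trace (y.transpose * x) = Matrix.trace (x.transpose * y) := by
    simpa using e 1
  rw [e, e0, ← (hasDerivAt_trace_exp (kernelPoly s N) (x.transpose * y) (Lgen i)).deriv, Xy]
  congr 1
  funext t
  rw [sigmaK_eq N hs hev hx (hy.mul (isSO3_exp i t)), ← e, Matrix.transpose_mul, mul_assoc]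

lemma Xx_Xy_sigmaK {s : ℕ} (N : ℕ) (hs : 6 ≤ s) (hev : Even s) (i j : Fin 3) {x y : Mat3}
    (hx : IsSO3 x) (hy : IsSO3 y) :
    Xx j (Xy i (sigmaK s N)) x y =
      (Polynomial.derivative (Polynomial.derivative (kernelPoly s N))).eval
          ((Matrix.trace (y.transpose * x) - 1) / 2) *
        (Matrix.trace (y.transpose * x * Lgen j) / 2) *
        (Matrix.trace ((Lgen i).transpose * (y.transpose * x)) / 2) +
      (Polynomial.derivative (kernelPoly s N)).eval ((Matrix.trace (y.transpose * x) - 1) / 2) *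
        (Matrix.trace ((Lgen i).transpose * (y.transpose * x) * Lgen j) / 2) := by
  have h1 := hasDerivAt_trace_exp (Polynomial.derivative (kernelPoly s N)) (y.transpose * x) (Lgen j)
  have h2 := hasDerivAt_map_exp_smul (Matrix.traceLinearMap (Fin 3) ℝ ℝ ∘ₗ
    LinearMap.mulLeft ℝ ((Lgen i).transpose * (y.transpose * x))) (Lgen j)
  simp only [LinearMap.comp_apply, LinearMap.mulLeft_apply, Matrix.traceLinearMap_apply] at h2
  have h := h1.mul (h2.div_const 2)
  rw [zero_smul, NormedSpace.exp_zero, mul_one, mul_one] at h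
  rw [← h.deriv, Xx]
  congr 1
  funext t
  rw [Xy_sigmaK N hs hev i (hx.mul (isSO3_exp j t)) hy]
  simp only [Pi.mul_apply, mul_assoc]

end

section

open Finset Polynomial

lemma mul_cos_le_sin {A : ℝ} (h0 : 0 ≤ A) (h : A ≤ π / 2) : A * Real.cos A ≤ Real.sin A := by
  rcases h.lt_or_eq with h | rfl
  · have hc : 0 < Real.cos A := Real.cos_pos_of_mem_Ioo ⟨by linarith [Real.pi_pos], h⟩
    have := Real.le_tan h0 h
    rwa [Real.tan_eq_sin_div_cos, le_div_iff₀ hc] at this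
  · simp

lemma trace_quatMat_mul_Lgen (q : Fin 4 → ℝ) (j : Fin 3) :
    Matrix.trace (quatMat q * Lgen j) / 2 = -(2 * q 0 * q j.succ) := by
  fin_cases j <;>
    simp [Matrix.trace_fin_three, quatMat, Lgen] <;> ring

lemma trace_Lgen_transpose_mul_quatMat (q : Fin 4 → ℝ) (i : Fin 3) :
    Matrix.trace ((Lgen i).transpose * quatMat q) / 2 = 2 * q 0 * q i.succ := by
  rw [Lgen_transpose, neg_mul, Matrix.trace_neg, Matrix.trace_mul_comm, neg_div,
    trace_quatMat_mul_Lgen, neg_neg]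

lemma trace_Lgen_quatMat_Lgen_self (q : Fin 4 → ℝ) (i : Fin 3) :
    Matrix.trace ((Lgen i).transpose * quatMat q * Lgen i) / 2 = q 0 ^ 2 - q i.succ ^ 2 := by
  fin_cases i <;>
    simp [Matrix.trace_fin_three, quatMat, Lgen, Matrix.mul_apply, Fin.sum_univ_three] <;> ring

lemma exists_trace_Lgen_quatMat_Lgen (q : Fin 4 → ℝ) {i j : Fin 3} (hij : i ≠ j) :
    ∃ r : ℝ, r ^ 2 ≤ q 1 ^ 2 + q 2 ^ 2 + q 3 ^ 2 ∧
      Matrix.trace ((Lgen i).transpose * quatMat q * Lgen j) / 2 =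
        -(q i.succ * q j.succ) - q 0 * r := by
  have h1 := sq_nonneg (q 1)
  have h2 := sq_nonneg (q 2)
  have h3 := sq_nonneg (q 3)
  fin_cases i <;> fin_cases j <;> first | exact absurd rfl hij | skip
  · refine ⟨q 3, by linarith, ?_⟩
    simp [Matrix.trace_fin_three, quatMat, Lgen, Matrix.mul_apply, Fin.sum_univ_three]; ring
  · refine ⟨-q 2, by linarith, ?_⟩
    simp [Matrix.trace_fin_three, quatMat, Lgen, Matrix.mul_apply, Fin.sum_univ_three]; ring
  · refine ⟨-q 3, by linarith, ?_⟩
    simp [Matrix.trace_fin_three, quatMat, Lgen, Matrix.mul_apply, Fin.sum_univ_three]; ring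
  · refine ⟨q 1, by linarith, ?_⟩
    simp [Matrix.trace_fin_three, quatMat, Lgen, Matrix.mul_apply, Fin.sum_univ_three]; ring
  · refine ⟨q 2, by linarith, ?_⟩
    simp [Matrix.trace_fin_three, quatMat, Lgen, Matrix.mul_apply, Fin.sum_univ_three]; ring
  · refine ⟨-q 1, by linarith, ?_⟩
    simp [Matrix.trace_fin_three, quatMat, Lgen, Matrix.mul_apply, Fin.sum_univ_three]; ring

lemma two_mul_abs_mul_succ_le (q : Fin 4 → ℝ) {i j : Fin 3} (hij : i ≠ j) :
    2 * |q i.succ * q j.succ| ≤ q 1 ^ 2 + q 2 ^ 2 + q 3 ^ 2 := by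
  have h : ∀ u v w : ℝ, 2 * (|u| * |v|) ≤ u ^ 2 + v ^ 2 + w ^ 2 := fun u v w => by
    nlinarith [sq_nonneg (|u| - |v|), sq_nonneg w, sq_abs u, sq_abs v]
  have h12 := h (q 1) (q 2) (q 3)
  have h13 := h (q 1) (q 3) (q 2)
  have h23 := h (q 2) (q 3) (q 1)
  rw [abs_mul]
  fin_cases i <;> fin_cases j <;> first | exact absurd rfl hij | (simp; linarith)

/-- Entrywise size of the Hessian of a class function in terms of its radial derivatives. -/
lemma abs_hessian_le {P₁ P₂ a S A B₁ B₂ : ℝ} (hA : 0 < A) (hS : 0 < S) (ha : 0 ≤ a)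
    (haS : a ^ 2 + S ^ 2 = 1) (hAS : A * a ≤ S) (h1 : |P₁ * (2 * a * S)| ≤ B₁)
    (h2 : |P₁ * (2 * a ^ 2 - 1) - P₂ * (2 * a * S) ^ 2| ≤ B₂) (hB : 2 * B₁ ≤ B₂)
    (hBA : B₁ ≤ B₂ * A) :
    (∀ p, p ^ 2 ≤ S ^ 2 → |P₂ * -(2 * a * p) * (2 * a * p) + P₁ * (a ^ 2 - p ^ 2)| ≤ B₂) ∧
    ∀ p p' r, 2 * |p * p'| ≤ S ^ 2 → r ^ 2 ≤ S ^ 2 →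
      |P₂ * -(2 * a * p') * (2 * a * p) + P₁ * (-(p * p') - a * r)| ≤ B₂ := by
  have hS2 : 0 < S ^ 2 := by positivity
  have hB1 : 0 ≤ B₁ := (abs_nonneg _).trans h1
  have hB2 : 0 ≤ B₂ := (abs_nonneg _).trans h2
  have h1' : |P₁ * a| * (2 * S) ≤ B₁ := by
    have e : P₁ * (2 * a * S) = P₁ * a * (2 * S) := by ring
    rwa [e, abs_mul, abs_of_pos (show 0 < 2 * S by linarith)] at h1
  have hE : |P₁ * a ^ 2| ≤ B₂ / 2 := by
    have e : |P₁ * a ^ 2| = |P₁ * a| * a := by rw [sq, ← mul_assoc, abs_mul, abs_of_nonneg ha]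
    have : |P₁ * a ^ 2| * (2 * A) ≤ B₂ / 2 * (2 * A) := by
      rw [e]
      nlinarith [mul_le_mul_of_nonneg_left hAS (abs_nonneg (P₁ * a))]
    exact le_of_mul_le_mul_right this (by linarith)
  set D := P₁ * (2 * a ^ 2 - 1) - P₂ * (2 * a * S) ^ 2 with hD
  have hS' : S ^ 2 = 1 - a ^ 2 := by linarith
  refine ⟨fun p hp => ?_, fun p p' r hp hr => ?_⟩
  · refine le_of_mul_le_mul_right ?_ hS2
    rw [← abs_of_pos hS2, ← abs_mul, abs_of_pos hS2]
    have e : (P₂ * -(2 * a * p) * (2 * a * p) + P₁ * (a ^ 2 - p ^ 2)) * S ^ 2 =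
        p ^ 2 * D + (S ^ 2 - p ^ 2) * (P₁ * a ^ 2) := by
      rw [hD]; linear_combination (-P₁ * p ^ 2) * haS
    rw [e]
    refine (abs_add_le _ _).trans ?_
    rw [abs_mul, abs_mul, abs_of_nonneg (sq_nonneg p), abs_of_nonneg (sub_nonneg.2 hp)]
    nlinarith [mul_le_mul_of_nonneg_left h2 (sq_nonneg p),
      mul_le_mul_of_nonneg_left hE (sub_nonneg.2 hp), mul_nonneg hB2 (sub_nonneg.2 hp)]
  · refine le_of_mul_le_mul_right ?_ hS2
    rw [← abs_of_pos hS2, ← abs_mul, abs_of_pos hS2]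
    have e : (P₂ * -(2 * a * p') * (2 * a * p) + P₁ * (-(p * p') - a * r)) * S ^ 2 =
        p * p' * (D - P₁ * a ^ 2) - P₁ * a * r * S ^ 2 := by
      rw [hD]; linear_combination (-P₁ * p * p') * haS
    have hr' : |r| ≤ S := abs_le_of_sq_le_sq hr hS.le
    have t1 : |D - P₁ * a ^ 2| ≤ 3 / 2 * B₂ := (abs_sub _ _).trans (by linarith)
    have t2 : |P₁ * a * r| ≤ B₂ / 4 := by
      rw [abs_mul]
      nlinarith [mul_le_mul_of_nonneg_left hr' (abs_nonneg (P₁ * a))]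
    rw [e]
    refine (abs_sub _ _).trans ?_
    rw [abs_mul, abs_mul (P₁ * a * r), abs_of_pos hS2]
    nlinarith [mul_le_mul_of_nonneg_left t1 (abs_nonneg (p * p')),
      mul_le_mul_of_nonneg_left hp hB2, mul_le_mul_of_nonneg_right t2 hS2.le]

lemma decay_nonneg (s N : ℕ) (hev : Even s) (t : ℝ) : 0 ≤ decay s N t := by
  have := hev.pow_nonneg (((N : ℝ) + 1) * t)
  unfold decay
  positivity

lemma sq_succ_le {q : Fin 4 → ℝ} (i : Fin 3) :
    q i.succ ^ 2 ≤ q 1 ^ 2 + q 2 ^ 2 + q 3 ^ 2 := by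
  have h1 := sq_nonneg (q 1)
  have h2 := sq_nonneg (q 2)
  have h3 := sq_nonneg (q 3)
  fin_cases i <;> simp <;> linarith

/-- Decay of the kernel and of its derivatives away from the diagonal. -/
lemma kernel_entry_bounds {s N : ℕ} (hs : 6 ≤ s) (hev : Even s) (hN : 2 * s ≤ N) {x y : Mat3}
    (hx : IsSO3 x) (hy : IsSO3 y) (hw : 2 * s / 3 ≤ (N + 1) * rotAngle (y⁻¹ * x)) :
    |sigmaK s N x y| ≤ (s + 1 / 4) * decay s N (rotAngle (y⁻¹ * x)) ∧
    (∀ j, |Xx j (sigmaK s N) x y| ≤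
      (N + 1) * ((2 * s + 1 / 2) * decay s N (rotAngle (y⁻¹ * x)))) ∧
    (∀ i, |Xy i (sigmaK s N) x y| ≤
      (N + 1) * ((2 * s + 1 / 2) * decay s N (rotAngle (y⁻¹ * x)))) ∧
    ∀ i j, |Xx j (Xy i (sigmaK s N)) x y| ≤
      (N + 1) ^ 2 * ((4 * s + 1) * decay s N (rotAngle (y⁻¹ * x))) := by
  obtain ⟨q, h0, hq, hz⟩ := (hy.inv_mul hx).exists_quatMat
  have hu : IsUnitQuat q := hq
  have hz' : y.transpose * x = quatMat q := by rw [← hz, hy.inv_eq]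
  rw [hz, rotAngle_quatMat q hu h0] at hw ⊢
  simp only [Xx_Xy_sigmaK N hs hev _ _ hx hy, Xy_sigmaK N hs hev _ hx hy,
    Xx_sigmaK N hs hev _ hx hy, sigmaK_eq N hs hev hx hy, hz', trace_quatMat q hu,
    trace_quatMat_mul_Lgen, trace_Lgen_transpose_mul_quatMat]
  set A := Real.arccos (q 0) with hA
  have hs' : (6 : ℝ) ≤ s := by exact_mod_cast hs
  have hN' : (2 : ℝ) * s ≤ N := by exact_mod_cast hN
  have hN1 : (0 : ℝ) < N + 1 := by positivity
  have hA0 : 0 < A := by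
    by_contra hneg
    have : A = 0 := le_antisymm (not_lt.1 hneg) (Real.arccos_nonneg _)
    rw [this] at hw
    linarith
  have hA2 : A ≤ π / 2 := Real.arccos_le_pi_div_two.2 h0
  have hc : Real.cos A = q 0 := Real.cos_arccos (by linarith) (by nlinarith [hu.sq_le_one])
  have hS0 : 0 < Real.sin A := sin_arccos_pos h0 hA0
  have hS : Real.sin A ^ 2 = q 1 ^ 2 + q 2 ^ 2 + q 3 ^ 2 := hu.sin_arccos_sq
  obtain ⟨b0, b1, b2⟩ := kernelPoly_bounds s N hs hev hN (2 * A) (by linarith) hw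
  have hd := decay_nonneg s N hev (2 * A)
  rw [Real.cos_two_mul, hc] at b0 b1 b2
  rw [Real.sin_two_mul, hc] at b1 b2
  set d := decay s N (2 * A) with hdd
  set P₁ := (derivative (kernelPoly s N)).eval (2 * q 0 ^ 2 - 1) with hP₁
  set P₂ := (derivative (derivative (kernelPoly s N))).eval (2 * q 0 ^ 2 - 1) with hP₂
  have e : 2 * Real.sin A * q 0 = 2 * q 0 * Real.sin A := by ring
  rw [e] at b1 b2
  have hgrad : ∀ i : Fin 3, |P₁ * (2 * q 0 * q i.succ)| ≤ (N + 1) * ((2 * s + 1 / 2) * d) := by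
    intro i
    refine le_trans ?_ b1
    rw [abs_mul, abs_mul P₁, abs_mul (2 * q 0), abs_mul (2 * q 0)]
    have : |q i.succ| ≤ |Real.sin A| := by
      refine sq_le_sq.1 ?_
      rw [hS]; exact sq_succ_le i
    gcongr
  have hdN : 0 ≤ (N + 1) * ((2 * s + 1 / 2) * d) := by positivity
  obtain ⟨hd1, hd2⟩ := abs_hessian_le (A := A) (a := q 0) hA0 hS0 h0 (by rw [hS]; linarith)
    (by rw [← hc]; exact mul_cos_le_sin hA0.le hA2) b1 b2
    (by
      have e : ((N : ℝ) + 1) ^ 2 * ((4 * s + 1) * d) =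
        (N + 1) * ((2 * s + 1 / 2) * d) * (2 * (N + 1)) := by ring
      rw [e, mul_comm]
      exact mul_le_mul_of_nonneg_left (by linarith) hdN)
    (by
      have e : ((N : ℝ) + 1) ^ 2 * ((4 * s + 1) * d) * A =
        (N + 1) * ((2 * s + 1 / 2) * d) * ((N + 1) * (2 * A)) := by ring
      rw [e]
      exact le_mul_of_one_le_right hdN (by linarith))
  refine ⟨b0, fun j => ?_, hgrad, fun i j => ?_⟩
  · rw [mul_neg, abs_neg]; exact hgrad j
  · by_cases hij : i = j
    · subst hij
      rw [trace_Lgen_quatMat_Lgen_self]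
      exact hd1 _ (by rw [hS]; exact sq_succ_le i)
    · obtain ⟨r, hr, hr'⟩ := exists_trace_Lgen_quatMat_Lgen q hij
      rw [hr']
      exact hd2 _ _ _ (by rw [hS]; exact two_mul_abs_mul_succ_le q hij) (by rw [hS]; exact hr)

lemma trace_Lgen (i : Fin 3) : Matrix.trace (Lgen i) = 0 := by
  fin_cases i <;> simp [Matrix.trace_fin_three, Lgen]

lemma trace_Lgen_transpose_mul_Lgen (i j : Fin 3) :
    Matrix.trace ((Lgen i).transpose * Lgen j) / 2 = if i = j then 1 else 0 := by
  fin_cases i <;> fin_cases j <;>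
    simp [Matrix.trace_fin_three, Lgen, Matrix.mul_apply, Fin.sum_univ_three]

/-- The kernel and its derivatives on the diagonal. -/
lemma kernel_entry_diag {s N : ℕ} (hs : 6 ≤ s) (hev : Even s) (hN : 2 * s ≤ N) {x : Mat3}
    (hx : IsSO3 x) :
    sigmaK s N x x = 1 ∧ (∀ j, Xx j (sigmaK s N) x x = 0) ∧ (∀ i, Xy i (sigmaK s N) x x = 0) ∧
    ∀ i j, Xx j (Xy i (sigmaK s N)) x x =
      if i = j then (derivative (kernelPoly s N)).eval 1 else 0 := by
  have e : (Matrix.trace (1 : Mat3) - 1) / 2 = 1 := by rw [Matrix.trace_one]; norm_num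
  simp only [Xx_Xy_sigmaK N hs hev _ _ hx hx, Xy_sigmaK N hs hev _ hx hx,
    Xx_sigmaK N hs hev _ hx hx, sigmaK_eq N hs hev hx hx, hx.1, e, mul_one, one_mul,
    Matrix.trace_transpose, trace_Lgen, trace_Lgen_transpose_mul_Lgen,
    kernelPoly_eval_one s N hs hev hN]
  simp

/-- Scaling weights of the function block and the derivative blocks. -/
noncomputable def blockWeight (N : ℕ) (p : Fin 4) : ℝ := if p = 0 then 1 / 2 else N + 1

lemma blockWeight_pos (N : ℕ) (p : Fin 4) : 0 < blockWeight N p := by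
  unfold blockWeight
  split_ifs <;> positivity

lemma abs_Kblock_le {s N : ℕ} (hs : 6 ≤ s) (hev : Even s) (hN : 2 * s ≤ N) {x y : Mat3}
    (hx : IsSO3 x) (hy : IsSO3 y) (hw : 2 * s / 3 ≤ (N + 1) * rotAngle (y⁻¹ * x)) (p q : Fin 4) :
    |Kblock s N p q x y| ≤
      blockWeight N p * blockWeight N q * ((4 * s + 1) * decay s N (rotAngle (y⁻¹ * x))) := by
  obtain ⟨h0, h1, h2, h3⟩ := kernel_entry_bounds hs hev hN hx hy hw
  set d := decay s N (rotAngle (y⁻¹ * x))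
  have e0 : 1 / 4 * ((4 * s + 1) * d) = (s + 1 / 4) * d := by ring
  have e1 : 1 / 2 * ((N : ℝ) + 1) * ((4 * s + 1) * d) = (N + 1) * ((2 * s + 1 / 2) * d) := by ring
  have e2 : ((N : ℝ) + 1) * (1 / 2) * ((4 * s + 1) * d) = (N + 1) * ((2 * s + 1 / 2) * d) := by ring
  have e3 : ((N : ℝ) + 1) * (N + 1) * ((4 * s + 1) * d) = (N + 1) ^ 2 * ((4 * s + 1) * d) := by ring
  fin_cases p <;> fin_cases q <;> simp only [blockWeight, Kblock, toOp] <;> norm_num <;>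
    first
    | exact e0 ▸ h0
    | exact e1 ▸ h1 _
    | exact e2 ▸ h2 _
    | exact e3 ▸ h3 _ _

/-- The diagonal entry of the interpolation matrix in block `p`. -/
noncomputable def diagEntry (s N : ℕ) (p : Fin 4) : ℝ :=
  if p = 0 then 1 else (derivative (kernelPoly s N)).eval 1

lemma Kblock_self {s N : ℕ} (hs : 6 ≤ s) (hev : Even s) (hN : 2 * s ≤ N) {x : Mat3}
    (hx : IsSO3 x) (p q : Fin 4) :
    Kblock s N p q x x = if p = q then diagEntry s N p else 0 := by
  obtain ⟨h0, h1, h2, h3⟩ := kernel_entry_diag hs hev hN hx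
  fin_cases p <;> fin_cases q <;> simp [Kblock, toOp, diagEntry, h0, h1, h2, h3]

lemma one_le_zetaNat {m : ℕ} (hm : 2 ≤ m) : 1 ≤ zetaNat m := by
  have := (summable_zetaNat m hm).le_tsum 0 fun n _ => by positivity
  simpa [zetaNat] using this

lemma div_three_pow_le_factorial (s : ℕ) : ((s : ℝ) / 3) ^ s ≤ s.factorial := by
  have h := Real.pow_div_factorial_le_exp (s : ℝ) s.cast_nonneg s
  have he : Real.exp s ≤ 3 ^ s := by
    rw [← Real.exp_one_pow]
    gcongr
    linarith [Real.exp_one_lt_d9]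
  rw [div_pow, div_le_iff₀ (by positivity), mul_comm]
  rw [div_le_iff₀ (by positivity)] at h
  exact h.trans (by gcongr)

lemma two_pow_mul_factorial_le_CConst {s : ℕ} (hs : 6 ≤ s) :
    2 ^ s * (s.factorial : ℝ) ≤ CConst 2 s := by
  have hz := one_le_zetaNat (m := s - 2) (by omega)
  have e : (s.factorial : ℝ) = s * (s - 1).factorial := by
    exact_mod_cast (Nat.mul_factorial_pred (by omega)).symm
  have h0 : (0 : ℝ) ≤ 2 ^ s * (s - 1).factorial := by positivity
  have h1 : (0 : ℝ) ≤ 2 ^ s * (s - 1).factorial * s := by positivity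
  have h2 : 2 ^ s * (s.factorial : ℝ) ≤ 124 * cConst 2 s := by
    rw [e]
    simp only [cConst]
    linarith
  unfold CConst
  exact h2.trans (le_mul_of_one_le_right (le_trans (by positivity) h2) hz)

lemma CConst_pos {s : ℕ} (hs : 6 ≤ s) : 0 < CConst 2 s :=
  lt_of_lt_of_le (by positivity) (two_pow_mul_factorial_le_CConst hs)

lemma two_mul_div_three_le {s : ℕ} (hs : 6 ≤ s) {ν : ℝ} (hν : 0 ≤ ν) (h : CConst 2 s ≤ ν ^ s) :
    2 * (s : ℝ) / 3 ≤ ν := by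
  by_contra hlt
  have h1 : ν ^ s < (2 * (s : ℝ) / 3) ^ s := pow_lt_pow_left₀ (not_le.1 hlt) hν (by omega)
  have h2 : (2 * (s : ℝ) / 3) ^ s = 2 ^ s * (s / 3) ^ s := by rw [← mul_pow]; congr 1; ring
  have h3 : 2 ^ s * ((s : ℝ) / 3) ^ s ≤ 2 ^ s * s.factorial := by
    gcongr; exact div_three_pow_le_factorial s
  linarith [two_pow_mul_factorial_le_CConst hs]

/-- Summed decay over the nodes away from a given one. -/
lemma sum_decay_le {s N M : ℕ} (hs : 6 ≤ s) {ν : ℝ} (hν : 0 < ν) {x : Fin M → Mat3}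
    (hx : ∀ a, IsSO3 (x a))
    (hsep : ∀ a b, a ≠ b → ν / ((N : ℝ) + 1) ≤ rotAngle ((x b)⁻¹ * (x a))) (i : Fin M) :
    ∑ k ∈ univ.erase i, (4 * s + 1) * decay s N (rotAngle ((x k)⁻¹ * x i)) ≤
      CConst 2 s / ν ^ s := by
  have hN1 : (0 : ℝ) < N + 1 := by positivity
  have h := sum_rotAngle_le (univ.erase i) (fun k => (x k)⁻¹ * x i)
    (fun k _ => (hx k).inv_mul (hx i)) (δ := ν / (N + 1)) (by positivity)
    (fun k hk => hsep i k (ne_of_mem_erase hk).symm)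
    (fun k _ l _ hkl => by
      have e : (x k)⁻¹ * x i * ((x l)⁻¹ * x i).transpose = (x k)⁻¹ * x l := by
        rw [(hx l).inv_eq, Matrix.transpose_mul, Matrix.transpose_transpose, mul_assoc,
          ← mul_assoc (x i), (hx i).mul_transpose, one_mul]
      rw [e]
      exact hsep l k hkl.symm) s hs
  have e : ∀ k, (4 * s + 1) * decay s N (rotAngle ((x k)⁻¹ * x i)) =
      cConst 2 s / ((N : ℝ) + 1) ^ s * (1 / rotAngle ((x k)⁻¹ * x i) ^ s) := fun k => by
    rw [decay, cConst, mul_pow, div_mul_div_comm, mul_one, mul_div_assoc']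
    congr 1
    ring
  rw [sum_congr rfl fun k _ => e k, ← mul_sum]
  have hc : 0 ≤ cConst 2 s / ((N : ℝ) + 1) ^ s := by simp only [cConst]; positivity
  refine (mul_le_mul_of_nonneg_left h hc).trans (le_of_eq ?_)
  rw [CConst, div_pow]
  field_simp

lemma abs_sum_mul_le {ι : Type*} (S : Finset ι) (f v : ι → ℝ) {R V : ℝ} (hV : 0 ≤ V)
    (hf : ∑ k ∈ S, |f k| ≤ R) (hv : ∀ k ∈ S, |v k| ≤ V) : |∑ k ∈ S, f k * v k| ≤ R * V := by
  calc |∑ k ∈ S, f k * v k| ≤ ∑ k ∈ S, |f k * v k| := abs_sum_le_sum_abs _ _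
    _ ≤ ∑ k ∈ S, |f k| * V := sum_le_sum fun k hk => by
        rw [abs_mul]; exact mul_le_mul_of_nonneg_left (hv k hk) (abs_nonneg _)
    _ = (∑ k ∈ S, |f k|) * V := (sum_mul _ _ _).symm
    _ ≤ R * V := mul_le_mul_of_nonneg_right hf hV

/-- Each row of the system is dominated by its diagonal entry. -/
lemma abs_diag_mul_sub_le {s N M : ℕ} (hs : 6 ≤ s) (hev : Even s) (hN : 2 * s ≤ N)
    {x : Fin M → Mat3} (hx : ∀ a, IsSO3 (x a)) {ε : ℝ}
    (hw : ∀ a b, a ≠ b → 2 * (s : ℝ) / 3 ≤ (N + 1) * rotAngle ((x b)⁻¹ * (x a)))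
    (hε : ∀ i, ∑ k ∈ univ.erase i, (4 * s + 1) * decay s N (rotAngle ((x k)⁻¹ * x i)) ≤ ε)
    (α : Fin 4 × Fin M → ℝ) {V : Fin 4 → ℝ} (hV : ∀ q k, |α (q, k)| ≤ V q) (p : Fin 4)
    (i : Fin M) :
    |diagEntry s N p * α (p, i) - (Kmat s N x).mulVec α (p, i)| ≤
      blockWeight N p * ε * ∑ q, blockWeight N q * V q := by
  have hoff : ∀ q, |∑ k ∈ univ.erase i, Kblock s N p q (x i) (x k) * α (q, k)| ≤
      blockWeight N p * blockWeight N q * ε * V q := fun q => by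
    refine abs_sum_mul_le _ _ _ ((abs_nonneg _).trans (hV q i)) ?_ fun k _ => hV q k
    refine (sum_le_sum fun k hk => abs_Kblock_le hs hev hN (hx i) (hx k)
      (hw i k (ne_of_mem_erase hk).symm) p q).trans ?_
    rw [← mul_sum]
    exact mul_le_mul_of_nonneg_left (hε i)
      (mul_pos (blockWeight_pos N p) (blockWeight_pos N q)).le
  have e : (Kmat s N x).mulVec α (p, i) = diagEntry s N p * α (p, i) +
      ∑ q, ∑ k ∈ univ.erase i, Kblock s N p q (x i) (x k) * α (q, k) := by
    have : diagEntry s N p * α (p, i) = ∑ q, Kblock s N p q (x i) (x i) * α (q, i) := by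
      simp [Kblock_self hs hev hN (hx i)]
    rw [this, ← sum_add_distrib, Matrix.mulVec, dotProduct, Fintype.sum_prod_type]
    refine sum_congr rfl fun q _ => ?_
    rw [← add_sum_erase _ _ (mem_univ i)]
    rfl
  rw [e, sub_add_cancel_left, abs_neg]
  refine (abs_sum_le_sum_abs _ _).trans ((sum_le_sum fun q _ => hoff q).trans (le_of_eq ?_))
  rw [mul_sum]
  exact sum_congr rfl fun q _ => by ring

/-- A priori estimates for solutions of the interpolation system. -/
lemma coefficient_estimates {s N M : ℕ} (hs : 6 ≤ s) (hev : Even s) (hN : 2 * s ≤ N)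
    {x : Fin M → Mat3} (hx : ∀ a, IsSO3 (x a)) {b c : ℝ} (hc : c = 0.999 / (2 * ((s : ℝ) + 1)))
    (hb : 3 + c / 4 < b)
    (hw : ∀ a b, a ≠ b → 2 * (s : ℝ) / 3 ≤ (N + 1) * rotAngle ((x b)⁻¹ * (x a)))
    (hε : ∀ i, ∑ k ∈ univ.erase i, (4 * s + 1) * decay s N (rotAngle ((x k)⁻¹ * x i)) ≤ c / b)
    (α : Fin 4 × Fin M → ℝ) {u : Fin M → ℝ} {U : ℝ} (hU0 : 0 ≤ U) (hU : ∀ i, |u i| ≤ U)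
    (hα : (Kmat s N x).mulVec α = rhsVec u) :
    (∀ i, |α (0, i) - u i| ≤ c / (4 * (b - 3) - c) * U) ∧
    ∀ (j : Fin 3) i, |α (j.succ, i)| ≤ 2 / ((4 * (b - 3) - c) * (N + 1)) * U := by
  have hc0 : 0 < c := by rw [hc]; positivity
  have hb3 : 0 < b - 3 := by linarith
  have hb0 : 0 < b := by linarith
  have hD : 0 < 4 * (b - 3) - c := by linarith
  have hN1 : (0 : ℝ) < N + 1 := by positivity
  set A := ⨆ i, |α (0, i)| with hA
  set B := ⨆ r : Fin 3 × Fin M, |α (r.1.succ, r.2)| with hB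
  have hA' : ∀ i, |α (0, i)| ≤ A := fun i =>
    le_ciSup (f := fun i => |α (0, i)|) (Set.finite_range _).bddAbove i
  have hB' : ∀ j i, |α (Fin.succ j, i)| ≤ B := fun j i =>
    le_ciSup (f := fun r : Fin 3 × Fin M => |α (r.1.succ, r.2)|) (Set.finite_range _).bddAbove
      (j, i)
  have hA0 : 0 ≤ A := Real.iSup_nonneg fun _ => abs_nonneg _
  have hB0 : 0 ≤ B := Real.iSup_nonneg fun _ => abs_nonneg _
  have key := abs_diag_mul_sub_le hs hev hN hx hw hε α (V := Fin.cons A fun _ => B)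
    (fun q k => by
      refine Fin.cases ?_ (fun j => ?_) q
      · exact hA' k
      · exact hB' j k)
  have hT : ∑ q, blockWeight N q * (Fin.cons A fun _ => B : Fin 4 → ℝ) q =
      A / 2 + 3 * ((N + 1) * B) := by
    simp [Fin.sum_univ_succ, blockWeight]; ring
  rw [hT] at key
  have hBA : (N + 1) * B ≤ A / (2 * (b - 3)) := by
    have hBle : B ≤ (1 / (b * (N + 1))) * (A / 2 + 3 * ((N + 1) * B)) := by
      refine Real.iSup_le (fun r => ?_) (by positivity)
      have h := key r.1.succ r.2
      have hd := derivative_kernelPoly_eval_one_ge s N hs hev hN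
      rw [← hc] at hd
      rw [hα] at h
      simp only [rhsVec, diagEntry, blockWeight, Fin.succ_ne_zero, if_false, sub_zero, abs_mul] at h
      have h' := (mul_le_mul_of_nonneg_right (hd.trans (le_abs_self _))
        (abs_nonneg (α (r.1.succ, r.2)))).trans h
      have hp : 0 < c * ((N : ℝ) + 1) ^ 2 := by positivity
      refine le_of_mul_le_mul_left (h'.trans (le_of_eq ?_)) hp
      field_simp
    rw [le_div_iff₀ (by positivity)]
    have : b * ((N + 1) * B) ≤ A / 2 + 3 * ((N + 1) * B) := by
      calc b * ((N + 1) * B) ≤ b * ((N + 1) * ((1 / (b * (N + 1))) * (A / 2 + 3 * ((N + 1) * B)))) := by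
            gcongr
        _ = _ := by field_simp
    linarith
  have h0 : ∀ i, |α (0, i) - u i| ≤ c / (4 * (b - 3)) * A := fun i => by
    have h := key 0 i
    rw [hα] at h
    simp only [rhsVec, diagEntry, blockWeight, if_true, one_mul] at h
    refine h.trans ?_
    calc 1 / 2 * (c / b) * (A / 2 + 3 * ((N + 1) * B))
        ≤ 1 / 2 * (c / b) * (A / 2 + 3 * (A / (2 * (b - 3)))) := by gcongr
      _ = _ := by field_simp; ring
  have hAU : A ≤ 4 * (b - 3) / (4 * (b - 3) - c) * U := by
    have h1 : A ≤ U + c / (4 * (b - 3)) * A := Real.iSup_le (fun i => by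
      have := abs_sub_abs_le_abs_sub (α (0, i)) (u i)
      linarith [h0 i, hU i]) (by positivity)
    have h2 : A * (4 * (b - 3) - c) ≤ 4 * (b - 3) * U := by
      have : c / (4 * (b - 3)) * A * (4 * (b - 3)) = c * A := by field_simp
      nlinarith
    rw [div_mul_eq_mul_div, le_div_iff₀ hD]
    exact h2
  refine ⟨fun i => (h0 i).trans ?_, fun j i => (hB' j i).trans ?_⟩
  · calc c / (4 * (b - 3)) * A ≤ c / (4 * (b - 3)) * (4 * (b - 3) / (4 * (b - 3) - c) * U) := by
          gcongr
      _ = _ := by field_simp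
  · have h1 : (N + 1) * B ≤ 2 / (4 * (b - 3) - c) * U := by
      refine hBA.trans ?_
      calc A / (2 * (b - 3)) ≤ 4 * (b - 3) / (4 * (b - 3) - c) * U / (2 * (b - 3)) := by gcongr
        _ = _ := by field_simp; ring
    calc B = (N + 1) * B / (N + 1) := by field_simp
      _ ≤ 2 / (4 * (b - 3) - c) * U / (N + 1) := by gcongr
      _ = _ := by field_simp

end

theorem interpolation_coefficient_bounds
    (s N : ℕ) (hs_even : Even s) (hs : 6 ≤ s) (hN : 2 * s ≤ N)
    (ν : ℝ) (hν : π ≤ ν)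
    (M : ℕ) (x : Fin M → Mat3) (hx : ∀ a, IsSO3 (x a)) (hinj : Function.Injective x)
    (hsep : ∀ a b, a ≠ b → ν / ((N : ℝ) + 1) ≤ rotAngle ((x b)⁻¹ * (x a)))
    (b : ℝ) (hb : 3 + (0.999 / (2 * ((s : ℝ) + 1))) / 4 < b)
    (hν' : b * (CConst 2 s / (0.999 / (2 * ((s : ℝ) + 1)))) < ν ^ s) :
    IsUnit (Kmat s N x) ∧
    ∀ u : Fin M → ℝ, (∀ i, u i = 1 ∨ u i = -1) →
      ∀ α : Fin 4 × Fin M → ℝ, (Kmat s N x).mulVec α = rhsVec u →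
        ((⨆ i, |α (0, i)|) ≤
            1 + (0.999 / (2 * ((s : ℝ) + 1))) /
              (4 * (b - 3) - 0.999 / (2 * ((s : ℝ) + 1)))) ∧
        (∀ j : Fin 3, (⨆ i, |α (j.succ, i)|) ≤
            2 / ((4 * (b - 3) - 0.999 / (2 * ((s : ℝ) + 1))) * ((N : ℝ) + 1))) ∧
        (∀ i, u i = 1 →
          1 - (0.999 / (2 * ((s : ℝ) + 1))) /
              (4 * (b - 3) - 0.999 / (2 * ((s : ℝ) + 1))) ≤ α (0, i)) := by
  obtain ⟨c, hc⟩ : ∃ c, c = 0.999 / (2 * ((s : ℝ) + 1)) := ⟨_, rfl⟩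
  rw [← hc] at hb hν' ⊢
  have hc0 : 0 < c := by rw [hc]; positivity
  have hc1 : c ≤ 1 := by
    rw [hc, div_le_one (by positivity)]
    linarith [(Nat.cast_nonneg s : (0 : ℝ) ≤ s)]
  have hb0 : 0 < b := by linarith
  have hD : 0 < 4 * (b - 3) - c := by linarith
  have hN1 : (0 : ℝ) < N + 1 := by positivity
  have hν0 : 0 < ν := Real.pi_pos.trans_le hν
  have hC := CConst_pos hs
  have hCν : CConst 2 s ≤ ν ^ s := by
    have h1 : CConst 2 s ≤ CConst 2 s / c := le_div_self hC.le hc0 hc1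
    have h2 : CConst 2 s / c ≤ b * (CConst 2 s / c) :=
      le_mul_of_one_le_left (by positivity) (by linarith)
    linarith
  have hw : ∀ a b, a ≠ b → 2 * (s : ℝ) / 3 ≤ (N + 1) * rotAngle ((x b)⁻¹ * (x a)) :=
    fun a b hab => by
      have h := hsep a b hab
      rw [div_le_iff₀ hN1] at h
      linarith [two_mul_div_three_le hs hν0.le hCν]
  have hε : ∀ i, ∑ k ∈ Finset.univ.erase i,
      (4 * s + 1) * decay s N (rotAngle ((x k)⁻¹ * x i)) ≤ c / b := fun i => by
    refine (sum_decay_le hs hν0 hx hsep i).trans ?_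
    rw [div_le_div_iff₀ (by positivity) hb0]
    rw [mul_div_assoc', div_lt_iff₀ hc0] at hν'
    linarith
  have est := fun α u U => coefficient_estimates hs hs_even hN hx hc hb hw hε α (u := u) (U := U)
  refine ⟨?_, fun u hu α hα => ?_⟩
  · rw [← Matrix.mulVec_injective_iff_isUnit]
    refine (injective_iff_map_eq_zero (Matrix.mulVecLin (Kmat s N x))).2 fun α hα => ?_
    obtain ⟨h0, h1⟩ := est α 0 0 le_rfl (by simp) (by
      rw [← Matrix.mulVecLin_apply, hα]
      funext r
      simp [rhsVec])
    funext ⟨q, i⟩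
    refine Fin.cases ?_ (fun j => ?_) q
    · simpa using h0 i
    · simpa using h1 j i
  · have hu1 : ∀ i, |u i| ≤ 1 := fun i => by rcases hu i with h | h <;> simp [h]
    obtain ⟨h0, h1⟩ := est α u 1 zero_le_one hu1 hα
    simp only [mul_one] at h0 h1
    refine ⟨Real.iSup_le (fun i => ?_) (by positivity),
      fun j => Real.iSup_le (fun i => h1 j i) (by positivity), fun i hi => ?_⟩
    · linarith [abs_sub_abs_le_abs_sub (α (0, i)) (u i), h0 i, hu1 i]
    · have := (abs_le.1 (h0 i)).1
      rw [hi] at this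
      linarith
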